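/- arXiv:2210.06062 — 13 statements merged into one kernel-verified Lean document; each statement's English description precedes it below -/
import Mathlib

section
/- Let f and g be real-valued functions on ℝ, both specularly differentiable at a point x₀ ∈ ℝ. Then f + g is specularly differentiable at x₀, and the phototangent of f + g at x₀ equals the pointwise sum of the phototangent of f at x₀ and the phototangent of g at x₀. -/
open Filter Topology Set

/-- The combination function `A(α,β)` from the paper: the slope of the specular
tangent determined by one-sided slopes `α` (right) and `β` (left). -/
noncomputable def specA (α β : ℝ) : ℝ :=
  if α + β = 0 then 0
  else (α * β - 1 + Real.sqrt ((α ^ 2 + 1) * (β ^ 2 + 1))) / (α + β)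

/-- `HasSpecData f x₀ L α β` means: the left and right limits of `f` at `x₀` both
exist and are equal to `L`, the right specular derivative of `f` at `x₀` is `α`,
and the left specular derivative of `f` at `x₀` is `β`. -/
def HasSpecData (f : ℝ → ℝ) (x₀ L α β : ℝ) : Prop :=
  Tendsto f (𝓝[<] x₀) (𝓝 L) ∧ Tendsto f (𝓝[>] x₀) (𝓝 L) ∧
    Tendsto (fun x => (f x - L) / (x - x₀)) (𝓝[>] x₀) (𝓝 α) ∧
    Tendsto (fun x => (f x - L) / (x - x₀)) (𝓝[<] x₀) (𝓝 β)

/-- `f` is specularly differentiable at `x₀`. -/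
def SpecDifferentiableAt (f : ℝ → ℝ) (x₀ : ℝ) : Prop :=
  ∃ L α β, HasSpecData f x₀ L α β

/-- `f` is specularly differentiable at `x₀` with specular derivative `d`. -/
def HasSpecDerivAt (f : ℝ → ℝ) (x₀ d : ℝ) : Prop :=
  ∃ L α β, HasSpecData f x₀ L α β ∧ d = specA α β
/-- The phototangent determined by point `x₀`, left limit `l`, right limit `r`,
left specular derivative `dm`, and right specular derivative `dp`. -/
noncomputable def phtFun (x₀ l r dm dp : ℝ) : ℝ → ℝ := fun y =>
  if y < x₀ then dm * (y - x₀) + l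
  else if y = x₀ then (l + r) / 2
  else dp * (y - x₀) + r

theorem specular_add (f g : ℝ → ℝ) (x₀ : ℝ) (Lf αf βf Lg αg βg : ℝ)
    (hf : HasSpecData f x₀ Lf αf βf) (hg : HasSpecData g x₀ Lg αg βg) :
    SpecDifferentiableAt (f + g) x₀ ∧
      HasSpecData (f + g) x₀ (Lf + Lg) (αf + αg) (βf + βg) ∧
      ∀ y, phtFun x₀ Lf Lf βf αf y + phtFun x₀ Lg Lg βg αg y
        = phtFun x₀ (Lf + Lg) (Lf + Lg) (βf + βg) (αf + αg) y := by
  have key : HasSpecData (f + g) x₀ (Lf + Lg) (αf + αg) (βf + βg) := by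
    obtain ⟨f1, f2, f3, f4⟩ := hf
    obtain ⟨g1, g2, g3, g4⟩ := hg
    have e : (fun x => ((f + g) x - (Lf + Lg)) / (x - x₀)) =
        fun x => (f x - Lf) / (x - x₀) + (g x - Lg) / (x - x₀) := by
      funext x
      simp only [Pi.add_apply]
      ring
    refine ⟨f1.add g1, f2.add g2, ?_, ?_⟩
    · rw [e]
      exact f3.add g3
    · rw [e]
      exact f4.add g4
  refine ⟨⟨_, _, _, key⟩, key, fun y => ?_⟩
  unfold phtFun
  split_ifs <;> ring
end

section
/- (Specular Derivatives Criterion) Let f : ℝ → ℝ be specularly differentiable at x ∈ ℝ. Then f^S(x) = lim_{h→0} [ (f(x+h) − f[x])·√((f(x−h) − f[x])² + h²) − (f(x−h) − f[x])·√((f(x+h) − f[x])² + h²) ] / [ h·√((f(x−h) − f[x])² + h²) + h·√((f(x+h) − f[x])² + h²) ]. -/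
open Filter Topology Set

/-- The limiting expression in terms of the two difference quotients. -/
noncomputable def specG (p q : ℝ) : ℝ :=
  (p * Real.sqrt (q ^ 2 + 1) + q * Real.sqrt (p ^ 2 + 1)) /
    (Real.sqrt (q ^ 2 + 1) + Real.sqrt (p ^ 2 + 1))

lemma specG_comm (p q : ℝ) : specG p q = specG q p := by
  unfold specG
  rw [add_comm, add_comm (Real.sqrt (q ^ 2 + 1))]

lemma specG_eq (a b : ℝ) : specG a b = specA a b := by
  unfold specG specA
  have hA : 0 < Real.sqrt (a ^ 2 + 1) := Real.sqrt_pos.2 (by positivity)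
  have hB : 0 < Real.sqrt (b ^ 2 + 1) := Real.sqrt_pos.2 (by positivity)
  have hA2 : Real.sqrt (a ^ 2 + 1) ^ 2 = a ^ 2 + 1 := Real.sq_sqrt (by positivity)
  have hB2 : Real.sqrt (b ^ 2 + 1) ^ 2 = b ^ 2 + 1 := Real.sq_sqrt (by positivity)
  split_ifs with h
  · have hb : b = -a := by linarith
    subst hb
    simp
  · rw [Real.sqrt_mul (by positivity), div_eq_div_iff (by positivity) h]
    generalize Real.sqrt (a ^ 2 + 1) = A at *
    generalize Real.sqrt (b ^ 2 + 1) = B at *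
    linear_combination (-B) * hA2 - A * hB2

lemma specG_tendsto {l : Filter ℝ} {p q : ℝ → ℝ} {a b : ℝ}
    (hp : Tendsto p l (𝓝 a)) (hq : Tendsto q l (𝓝 b)) :
    Tendsto (fun h => specG (p h) (q h)) l (𝓝 (specG a b)) := by
  unfold specG
  have hP := ((hp.pow 2).add_const 1).sqrt
  have hQ := ((hq.pow 2).add_const 1).sqrt
  have hA : 0 < Real.sqrt (a ^ 2 + 1) := Real.sqrt_pos.2 (by positivity)
  exact ((hp.mul hQ).add (hq.mul hP)).div (hQ.add hP) (by positivity)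

lemma sqrt_scale (u h : ℝ) (hh : h ≠ 0) :
    Real.sqrt (u ^ 2 + h ^ 2) = |h| * Real.sqrt ((u / h) ^ 2 + 1) := by
  rw [← Real.sqrt_sq_eq_abs, ← Real.sqrt_mul (sq_nonneg h)]
  congr 1
  field_simp

lemma quot_eq (u v h : ℝ) (hh : h ≠ 0) :
    (u * Real.sqrt (v ^ 2 + h ^ 2) - v * Real.sqrt (u ^ 2 + h ^ 2)) /
      (h * Real.sqrt (v ^ 2 + h ^ 2) + h * Real.sqrt (u ^ 2 + h ^ 2))
      = specG (u / h) (v / (-h)) := by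
  have hv : (v / (-h)) ^ 2 = (v / h) ^ 2 := by rw [div_neg, neg_sq]
  have h0 : |h| ≠ 0 := abs_ne_zero.2 hh
  unfold specG
  rw [sqrt_scale u h hh, sqrt_scale v h hh, hv]
  have hA : 0 < Real.sqrt ((u / h) ^ 2 + 1) := Real.sqrt_pos.2 (by positivity)
  have hB : 0 < Real.sqrt ((v / h) ^ 2 + 1) := Real.sqrt_pos.2 (by positivity)
  generalize Real.sqrt ((u / h) ^ 2 + 1) = A at *
  generalize Real.sqrt ((v / h) ^ 2 + 1) = B at *
  have hAB : B + A ≠ 0 := by positivity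
  rw [← mul_add, ← mul_add, div_eq_div_iff (mul_ne_zero hh (mul_ne_zero h0 hAB)) hAB]
  field_simp
  ring

theorem specular_derivatives_criterion (f : ℝ → ℝ) (x L α β : ℝ)
    (hf : HasSpecData f x L α β) :
    Tendsto (fun h : ℝ =>
      ((f (x + h) - L) * Real.sqrt ((f (x - h) - L) ^ 2 + h ^ 2)
          - (f (x - h) - L) * Real.sqrt ((f (x + h) - L) ^ 2 + h ^ 2)) /
        (h * Real.sqrt ((f (x - h) - L) ^ 2 + h ^ 2)
          + h * Real.sqrt ((f (x + h) - L) ^ 2 + h ^ 2)))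
      (𝓝[≠] (0 : ℝ)) (𝓝 (specA α β)) := by
  obtain ⟨-, -, hr, hl⟩ := hf
  have key : Tendsto (fun h : ℝ => specG ((f (x + h) - L) / h) ((f (x - h) - L) / (-h)))
      (𝓝[≠] (0 : ℝ)) (𝓝 (specA α β)) := by
    have t1 : Tendsto (fun h : ℝ => x + h) (𝓝 0) (𝓝 x) :=
      Continuous.tendsto' (by fun_prop) _ _ (by simp)
    have t2 : Tendsto (fun h : ℝ => x - h) (𝓝 0) (𝓝 x) :=
      Continuous.tendsto' (by fun_prop) _ _ (by simp)
    have a1 : Tendsto (fun h : ℝ => x + h) (𝓝[>] 0) (𝓝[>] x) :=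
      t1.inf (tendsto_principal_principal.2 fun h hh => by
        simp only [mem_Ioi] at *; linarith)
    have a2 : Tendsto (fun h : ℝ => x + h) (𝓝[<] 0) (𝓝[<] x) :=
      t1.inf (tendsto_principal_principal.2 fun h hh => by
        simp only [mem_Iio] at *; linarith)
    have a3 : Tendsto (fun h : ℝ => x - h) (𝓝[>] 0) (𝓝[<] x) :=
      t2.inf (tendsto_principal_principal.2 fun h hh => by
        simp only [mem_Ioi, mem_Iio] at *; linarith)
    have a4 : Tendsto (fun h : ℝ => x - h) (𝓝[<] 0) (𝓝[>] x) :=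
      t2.inf (tendsto_principal_principal.2 fun h hh => by
        simp only [mem_Ioi, mem_Iio] at *; linarith)
    have e1 : ∀ h : ℝ, x + h - x = h := fun h => by ring
    have e2 : ∀ h : ℝ, x - h - x = -h := fun h => by ring
    have b1 := hr.comp a1
    have b2 := hl.comp a2
    have b3 := hl.comp a3
    have b4 := hr.comp a4
    simp only [Function.comp_def, e1, e2] at b1 b2 b3 b4
    rw [← Iio_union_Ioi, nhdsWithin_union, ← specG_eq]
    refine Tendsto.sup ?_ (specG_tendsto b1 b3)
    rw [specG_comm]
    exact specG_tendsto b2 b4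
  refine key.congr' ?_
  filter_upwards [self_mem_nhdsWithin] with h hh
  exact (quot_eq _ _ h hh).symm
end

section
/- Let f : ℝ → ℝ be specularly differentiable at x₀ ∈ ℝ. If f is symmetric about x = x₀ in a neighborhood of x₀, i.e., there exists δ > 0 such that f(x₀ − x) = f(x₀ + x) for all x ∈ (−δ, δ), then f^S(x₀) = 0. -/
open Filter Topology Set

theorem specular_deriv_of_symmetric (f : ℝ → ℝ) (x₀ d : ℝ)
    (hd : HasSpecDerivAt f x₀ d) (δ : ℝ) (hδ : 0 < δ)
    (hsym : ∀ x ∈ Set.Ioo (-δ) δ, f (x₀ - x) = f (x₀ + x)) :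
    d = 0 := by
  obtain ⟨L, α, β, ⟨-, -, hα, hβ⟩, rfl⟩ := hd
  have hmap : Tendsto (fun x : ℝ => 2 * x₀ - x) (𝓝[>] x₀) (𝓝[<] x₀) := by
    refine tendsto_nhdsWithin_iff.2 ⟨?_, ?_⟩
    · have hc : Continuous (fun x : ℝ => 2 * x₀ - x) := by fun_prop
      have h := hc.tendsto x₀
      have e : 2 * x₀ - x₀ = x₀ := by ring
      simp only [e] at h
      exact h.mono_left nhdsWithin_le_nhds
    · filter_upwards [self_mem_nhdsWithin] with x hx
      simp only [Set.mem_Ioi, Set.mem_Iio] at *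
      linarith
  have h1 := (hβ.comp hmap).neg
  have h2 : Tendsto (fun x => (f x - L) / (x - x₀)) (𝓝[>] x₀) (𝓝 (-β)) := by
    refine h1.congr' ?_
    filter_upwards [Ioo_mem_nhdsGT (show x₀ < x₀ + δ by linarith)] with x hx
    have h := hsym (x - x₀) ⟨by linarith [hx.1], by linarith [hx.2]⟩
    have e1 : x₀ - (x - x₀) = 2 * x₀ - x := by ring
    have e2 : x₀ + (x - x₀) = x := by ring
    rw [e1, e2] at h
    have e3 : 2 * x₀ - x - x₀ = -(x - x₀) := by ring
    simp only [Function.comp_apply, h, e3, div_neg, neg_neg]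
  have h3 : α = -β := tendsto_nhds_unique hα h2
  simp [specA, h3]
end

section
/- Let f : ℝ → ℝ and x₀ ∈ ℝ, and suppose both one-sided specular derivatives of f at x₀ exist (so the phototangent pht f of f at x₀ is defined). Then f is differentiable at x₀ if and only if f is continuous at x₀ and pht f is differentiable at x₀. -/
open Filter Topology Set

theorem spec_limits_eq (g : ℝ → ℝ) (x₀ l r : ℝ)
    (hl : Tendsto g (𝓝[<] x₀) (𝓝 l)) (hr : Tendsto g (𝓝[>] x₀) (𝓝 r))
    (hc : ContinuousAt g x₀) : l = g x₀ ∧ r = g x₀ :=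
  ⟨tendsto_nhds_unique hl (hc.tendsto.mono_left nhdsWithin_le_nhds),
   tendsto_nhds_unique hr (hc.tendsto.mono_left nhdsWithin_le_nhds)⟩

theorem spec_key (g : ℝ → ℝ) (x₀ l r dm dp : ℝ)
    (hl : Tendsto g (𝓝[<] x₀) (𝓝 l)) (hr : Tendsto g (𝓝[>] x₀) (𝓝 r))
    (hdp : Tendsto (fun x => (g x - r) / (x - x₀)) (𝓝[>] x₀) (𝓝 dp))
    (hdm : Tendsto (fun x => (g x - l) / (x - x₀)) (𝓝[<] x₀) (𝓝 dm)) :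
    DifferentiableAt ℝ g x₀ ↔ ContinuousAt g x₀ ∧ dm = dp := by
  have hs : slope g x₀ = fun x => (g x - g x₀) / (x - x₀) := by
    funext x
    exact slope_def_field g x₀ x
  constructor
  · intro h
    obtain ⟨h1, h2⟩ := spec_limits_eq g x₀ l r hl hr h.continuousAt
    subst h1
    subst h2
    have hd := hasDerivAt_iff_tendsto_slope.1 h.hasDerivAt
    rw [hs] at hd
    refine ⟨h.continuousAt, ?_⟩
    have e1 := tendsto_nhds_unique hdm
      (hd.mono_left (nhdsWithin_mono _ (fun x hx => ne_of_lt hx)))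
    have e2 := tendsto_nhds_unique hdp
      (hd.mono_left (nhdsWithin_mono _ (fun x hx => ne_of_gt hx)))
    rw [e1, e2]
  · rintro ⟨hc, rfl⟩
    obtain ⟨h1, h2⟩ := spec_limits_eq g x₀ l r hl hr hc
    subst h1
    subst h2
    have : HasDerivAt g dm x₀ := by
      rw [hasDerivAt_iff_tendsto_slope, hs, ← Set.Iio_union_Ioi, nhdsWithin_union]
      exact hdm.sup hdp
    exact this.differentiableAt

theorem differentiable_iff_continuous_and_pht_differentiable
    (f : ℝ → ℝ) (x₀ l r dm dp : ℝ)
    (hl : Tendsto f (𝓝[<] x₀) (𝓝 l)) (hr : Tendsto f (𝓝[>] x₀) (𝓝 r))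
    (hdp : Tendsto (fun x => (f x - r) / (x - x₀)) (𝓝[>] x₀) (𝓝 dp))
    (hdm : Tendsto (fun x => (f x - l) / (x - x₀)) (𝓝[<] x₀) (𝓝 dm)) :
    DifferentiableAt ℝ f x₀ ↔
      ContinuousAt f x₀ ∧ DifferentiableAt ℝ (phtFun x₀ l r dm dp) x₀ := by
  rw [spec_key f x₀ l r dm dp hl hr hdp hdm]
  constructor
  · rintro ⟨hc, rfl⟩
    obtain ⟨h1, h2⟩ := spec_limits_eq f x₀ l r hl hr hc
    refine ⟨hc, ?_⟩
    have : phtFun x₀ l r dm dm = fun y => dm * (y - x₀) + l := by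
      funext y
      unfold phtFun
      rw [h1, h2]
      split_ifs with ha hb
      · rfl
      · rw [hb]
        ring
      · rfl
    rw [this]
    fun_prop
  · rintro ⟨hc, hd⟩
    refine ⟨hc, ?_⟩
    have eL : ∀ y ∈ Iio x₀, phtFun x₀ l r dm dp y = dm * (y - x₀) + l := by
      intro y hy
      simp only [phtFun, if_pos (mem_Iio.1 hy)]
    have eR : ∀ y ∈ Ioi x₀, phtFun x₀ l r dm dp y = dp * (y - x₀) + r := by
      intro y hy
      simp only [phtFun, if_neg (not_lt_of_gt (mem_Ioi.1 hy)), if_neg (ne_of_gt (mem_Ioi.1 hy))]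
    have lim : ∀ a b : ℝ, Tendsto (fun y => a * (y - x₀) + b) (𝓝 x₀) (𝓝 b) := by
      intro a b
      have : Continuous (fun y => a * (y - x₀) + b) := by fun_prop
      simpa using this.tendsto x₀
    refine ((spec_key (phtFun x₀ l r dm dp) x₀ l r dm dp ?_ ?_ ?_ ?_).1 hd).2
    · refine ((lim dm l).mono_left nhdsWithin_le_nhds).congr' ?_
      filter_upwards [self_mem_nhdsWithin] with y hy using (eL y hy).symm
    · refine ((lim dp r).mono_left nhdsWithin_le_nhds).congr' ?_
      filter_upwards [self_mem_nhdsWithin] with y hy using (eR y hy).symm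
    · refine tendsto_const_nhds.congr' ?_
      filter_upwards [self_mem_nhdsWithin] with y hy
      have : y - x₀ ≠ 0 := sub_ne_zero.2 (ne_of_gt hy)
      rw [eR y hy]
      field_simp
      ring
    · refine tendsto_const_nhds.congr' ?_
      filter_upwards [self_mem_nhdsWithin] with y hy
      have : y - x₀ ≠ 0 := sub_ne_zero.2 (ne_of_lt hy)
      rw [eL y hy]
      field_simp
      ring
end

section
/- Let α, β ∈ ℝ with α + β ≠ 0, and set A(α, β) := (αβ − 1 + √((α² + 1)(β² + 1)))/(α + β). Then: (i) A(α, β) ≠ 0; (ii) A(α, β) has the same sign as α + β, i.e., sgn(A(α, β)) = sgn(α + β); (iii) −|α + β|/2 ≤ A(α, β) ≤ |α + β|/2. -/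
open Filter Topology Set

theorem specA_properties (α β : ℝ) (h : α + β ≠ 0) :
    specA α β ≠ 0 ∧ Real.sign (specA α β) = Real.sign (α + β) ∧
      -|α + β| / 2 ≤ specA α β ∧ specA α β ≤ |α + β| / 2 := by
  have hN : 0 < α * β - 1 + Real.sqrt ((α ^ 2 + 1) * (β ^ 2 + 1)) := by
    have : 1 - α * β < Real.sqrt ((α ^ 2 + 1) * (β ^ 2 + 1)) := by
      apply Real.lt_sqrt_of_sq_lt
      have : 0 < (α + β) ^ 2 := by positivity
      nlinarith
    linarith
  have hU : α * β - 1 + Real.sqrt ((α ^ 2 + 1) * (β ^ 2 + 1)) ≤ (α + β) ^ 2 / 2 := by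
    have : Real.sqrt ((α ^ 2 + 1) * (β ^ 2 + 1)) ≤ (α ^ 2 + β ^ 2 + 2) / 2 := by
      apply Real.sqrt_le_iff.mpr
      constructor
      · positivity
      · nlinarith [sq_nonneg (α ^ 2 - β ^ 2)]
    nlinarith
  unfold specA
  rw [if_neg h]
  generalize α * β - 1 + Real.sqrt ((α ^ 2 + 1) * (β ^ 2 + 1)) = N at *
  generalize α + β = s at *
  rcases lt_or_gt_of_ne h with hs | hs
  · have h1 : N / s < 0 := div_neg_of_pos_of_neg hN hs
    refine ⟨h1.ne, by rw [Real.sign_of_neg h1, Real.sign_of_neg hs], ?_, ?_⟩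
    · rw [abs_of_neg hs, le_div_iff_of_neg hs]
      nlinarith
    · rw [abs_of_neg hs]
      linarith
  · have h1 : 0 < N / s := div_pos hN hs
    refine ⟨h1.ne', by rw [Real.sign_of_pos h1, Real.sign_of_pos hs], ?_, ?_⟩
    · rw [abs_of_pos hs]
      linarith
    · rw [abs_of_pos hs, div_le_iff₀ hs]
      nlinarith
end

section
/- Let f : ℝ → ℝ be continuous on a closed interval [a, b] (a < b) and specularly differentiable at every point of (a, b). (i) If f(a) < f(b), then there exists c₁ ∈ (a, b) such that f^S(c₁) ≥ 0. (ii) If f(a) > f(b), then there exists c₂ ∈ (a, b) such that f^S(c₂) ≤ 0. -/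
open Filter Topology Set

theorem specA_nonneg (α β : ℝ) (h : 0 ≤ α + β) : 0 ≤ specA α β := by
  unfold specA
  split_ifs with h0
  · exact le_rfl
  · apply div_nonneg _ h
    have : 1 - α * β ≤ Real.sqrt ((α ^ 2 + 1) * (β ^ 2 + 1)) := by
      apply Real.le_sqrt_of_sq_le
      nlinarith [sq_nonneg (α + β)]
    linarith

theorem specA_nonpos (α β : ℝ) (h : α + β ≤ 0) : specA α β ≤ 0 := by
  unfold specA
  split_ifs with h0
  · exact le_rfl
  · apply div_nonpos_of_nonneg_of_nonpos _ h
    have : 1 - α * β ≤ Real.sqrt ((α ^ 2 + 1) * (β ^ 2 + 1)) := by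
      apply Real.le_sqrt_of_sq_le
      nlinarith [sq_nonneg (α + β)]
    linarith

theorem HasSpecData.neg' {f : ℝ → ℝ} {x L α β : ℝ} (h : HasSpecData f x L α β) :
    HasSpecData (fun y => -f y) x (-L) (-α) (-β) := by
  obtain ⟨h1, h2, h3, h4⟩ := h
  refine ⟨h1.neg, h2.neg, h3.neg.congr fun y => ?_, h4.neg.congr fun y => ?_⟩ <;> ring

theorem key (f : ℝ → ℝ) (a b : ℝ) (hab : a < b)
    (hcont : ContinuousOn f (Set.Icc a b))
    (hspec : ∀ x ∈ Set.Ioo a b, SpecDifferentiableAt f x) (hf : f a < f b) :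
    ∃ c ∈ Set.Ioo a b, ∃ L α β, HasSpecData f c L α β ∧ 0 ≤ α ∧ 0 ≤ β := by
  obtain ⟨k, hak, hkb⟩ := exists_between hf
  set S : Set ℝ := {x | x ∈ Set.Icc a b ∧ k < f x} with hS
  have hbS : b ∈ S := ⟨⟨hab.le, le_rfl⟩, hkb⟩
  have hbdd : BddBelow S := ⟨a, fun x hx => hx.1.1⟩
  set c := sInf S with hc
  have hac : a ≤ c := le_csInf ⟨b, hbS⟩ fun x hx => hx.1.1
  have hcb : c ≤ b := csInf_le hbdd hbS
  have hfreq : ∃ᶠ x in 𝓝 c, x ∈ S :=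
    mem_closure_iff_frequently.1 (csInf_mem_closure ⟨b, hbS⟩ hbdd)
  have hleft : ∀ x ∈ Set.Icc a b, x < c → f x ≤ k := by
    intro x hx hxc
    by_contra hlt
    exact absurd (csInf_le hbdd (show x ∈ S from ⟨hx, not_le.1 hlt⟩)) (not_le.2 hxc)
  have hcc : ContinuousWithinAt f (Set.Icc a b) c := hcont c ⟨hac, hcb⟩
  have hge : k ≤ f c := by
    by_contra hlt
    have h1 : ∀ᶠ x in 𝓝[Set.Icc a b] c, f x < k := hcc.eventually_lt_const (not_le.1 hlt)
    rw [eventually_nhdsWithin_iff] at h1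
    obtain ⟨x, hx, hx2⟩ := (hfreq.and_eventually h1).exists
    exact absurd (hx2 hx.1) (not_lt.2 hx.2.le)
  have hac' : a < c := lt_of_le_of_ne hac fun h => by rw [← h] at hge; linarith
  have hle : f c ≤ k := by
    have hsub : Set.Ioo a c ⊆ Set.Icc a b := fun x hx => ⟨hx.1.le, hx.2.le.trans hcb⟩
    have h1 : Tendsto f (𝓝[<] c) (𝓝 (f c)) := by
      rw [← nhdsWithin_Ioo_eq_nhdsLT hac']
      exact hcc.mono hsub
    refine le_of_tendsto h1 ?_
    filter_upwards [Ioo_mem_nhdsLT hac'] with x hx using hleft x (hsub hx) hx.2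
  have hck : f c = k := le_antisymm hle hge
  have hcb' : c < b := lt_of_le_of_ne hcb fun h => by rw [h] at hck; linarith
  obtain ⟨L, α, β, hd⟩ := hspec c ⟨hac', hcb'⟩
  have hca : ContinuousAt f c := hcc.continuousAt (Icc_mem_nhds hac' hcb')
  have hL : L = k := by
    rw [← hck]
    exact tendsto_nhds_unique hd.1 (hca.tendsto.mono_left nhdsWithin_le_nhds)
  refine ⟨c, ⟨hac', hcb'⟩, L, α, β, hd, ?_, ?_⟩
  · by_contra hneg
    have h1 := hd.2.2.1.eventually_lt_const (not_le.1 hneg)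
    rw [eventually_nhdsWithin_iff] at h1
    obtain ⟨x, hx, hx2⟩ := (hfreq.and_eventually h1).exists
    have hcx : c < x := lt_of_le_of_ne (csInf_le hbdd hx) fun h => by
      have := hx.2
      rw [← h] at this
      linarith
    have h3 := hx2 hcx
    have h4 : 0 ≤ (f x - L) / (x - c) := by
      apply div_nonneg
      · have := hx.2
        linarith
      · linarith
    linarith
  · refine ge_of_tendsto hd.2.2.2 ?_
    filter_upwards [Ioo_mem_nhdsLT hac'] with x hx
    have := hleft x ⟨hx.1.le, hx.2.le.trans hcb⟩ hx.2
    apply div_nonneg_of_nonpos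
    · linarith
    · linarith [hx.2]

theorem continuous_and_existence (f : ℝ → ℝ) (a b : ℝ) (hab : a < b)
    (hcont : ContinuousOn f (Set.Icc a b))
    (hspec : ∀ x ∈ Set.Ioo a b, SpecDifferentiableAt f x) :
    (f a < f b → ∃ c₁ ∈ Set.Ioo a b, ∃ d₁, HasSpecDerivAt f c₁ d₁ ∧ 0 ≤ d₁) ∧
      (f b < f a → ∃ c₂ ∈ Set.Ioo a b, ∃ d₂, HasSpecDerivAt f c₂ d₂ ∧ d₂ ≤ 0) := by
  constructor
  · intro h
    obtain ⟨c, hc, L, α, β, hd, h1, h2⟩ := key f a b hab hcont hspec h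
    exact ⟨c, hc, _, ⟨L, α, β, hd, rfl⟩, specA_nonneg _ _ (by linarith)⟩
  · intro h
    obtain ⟨c, hc, L, α, β, hd, h1, h2⟩ := key (fun x => -f x) a b hab hcont.neg
      (fun x hx => by
        obtain ⟨L, α, β, hd⟩ := hspec x hx
        exact ⟨_, _, _, hd.neg'⟩) (by simpa using h)
    have hd' := hd.neg'
    simp only [neg_neg] at hd'
    exact ⟨c, hc, _, ⟨_, _, _, hd', rfl⟩, specA_nonpos _ _ (by linarith)⟩
end

section
/- Let θ₁, θ₂, θ ∈ (−π/2, π/2) be such that tan θ = A(tan θ₁, tan θ₂). Then θ = (θ₁ + θ₂)/2. -/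
open Filter Topology Set

theorem average_of_angle (θ θ₁ θ₂ : ℝ)
    (hθ : θ ∈ Set.Ioo (-(Real.pi / 2)) (Real.pi / 2))
    (hθ₁ : θ₁ ∈ Set.Ioo (-(Real.pi / 2)) (Real.pi / 2))
    (hθ₂ : θ₂ ∈ Set.Ioo (-(Real.pi / 2)) (Real.pi / 2))
    (h : Real.tan θ = specA (Real.tan θ₁) (Real.tan θ₂)) :
    θ = (θ₁ + θ₂) / 2 := by
  have c1 : 0 < Real.cos θ₁ := Real.cos_pos_of_mem_Ioo hθ₁
  have c2 : 0 < Real.cos θ₂ := Real.cos_pos_of_mem_Ioo hθ₂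
  have hm : (θ₁ + θ₂) / 2 ∈ Set.Ioo (-(Real.pi / 2)) (Real.pi / 2) :=
    ⟨by linarith [hθ₁.1, hθ₂.1], by linarith [hθ₁.2, hθ₂.2]⟩
  have cm : 0 < Real.cos ((θ₁ + θ₂) / 2) := Real.cos_pos_of_mem_Ioo hm
  apply Real.injOn_tan hθ hm
  rw [h]
  have hsum : Real.tan θ₁ + Real.tan θ₂
      = Real.sin (θ₁ + θ₂) / (Real.cos θ₁ * Real.cos θ₂) := by
    rw [Real.tan_eq_sin_div_cos, Real.tan_eq_sin_div_cos, Real.sin_add]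
    field_simp
  have hprod : Real.tan θ₁ * Real.tan θ₂ - 1
      = - Real.cos (θ₁ + θ₂) / (Real.cos θ₁ * Real.cos θ₂) := by
    rw [Real.tan_eq_sin_div_cos, Real.tan_eq_sin_div_cos, Real.cos_add]
    field_simp
    ring
  have hsqrt : Real.sqrt ((Real.tan θ₁ ^ 2 + 1) * (Real.tan θ₂ ^ 2 + 1))
      = 1 / (Real.cos θ₁ * Real.cos θ₂) := by
    rw [Real.sqrt_eq_iff_mul_self_eq_of_pos (by positivity)]
    rw [Real.tan_eq_sin_div_cos, Real.tan_eq_sin_div_cos]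
    have e1 := Real.sin_sq_add_cos_sq θ₁
    have e2 := Real.sin_sq_add_cos_sq θ₂
    field_simp
    rw [e1, e2]
    norm_num
  have hS : Real.sin (θ₁ + θ₂)
      = 2 * Real.sin ((θ₁ + θ₂) / 2) * Real.cos ((θ₁ + θ₂) / 2) := by
    rw [← Real.sin_two_mul]
    congr 1
    ring
  have hC : Real.cos (θ₁ + θ₂) = 1 - 2 * Real.sin ((θ₁ + θ₂) / 2) ^ 2 := by
    have := Real.cos_two_mul ((θ₁ + θ₂) / 2)
    rw [show 2 * ((θ₁ + θ₂) / 2) = θ₁ + θ₂ by ring] at this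
    linarith [Real.sin_sq_add_cos_sq ((θ₁ + θ₂) / 2)]
  unfold specA
  rw [hprod, hsqrt, hsum, hS, hC, Real.tan_eq_sin_div_cos]
  generalize Real.sin ((θ₁ + θ₂) / 2) = s at *
  generalize Real.cos ((θ₁ + θ₂) / 2) = c at *
  by_cases hs : s = 0
  · simp [hs]
  · rw [if_neg (by positivity)]
    field_simp
    ring
end

section
/- Let f : ℝ → ℝ be continuous on an open interval (a, b) and specularly differentiable at every point of (a, b), and suppose there is a constant M > 0 with |f^S(x)| ≤ M for all x ∈ (a, b). Then for all x₁, x₂ ∈ (a, b), |f(x₁) − f(x₂)| ≤ M·|x₁ − x₂|. -/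
open Filter Topology Set

/-- Strict local minima of a real function form a countable set. -/
theorem countable_strict_local_min (h : ℝ → ℝ) :
    {p : ℝ | ∀ᶠ x in 𝓝[≠] p, h p < h x}.Countable := by
  have hsub : {p : ℝ | ∀ᶠ x in 𝓝[≠] p, h p < h x} ⊆
      ⋃ qr : ℚ × ℚ, {p : ℝ | p ∈ Ioo (qr.1 : ℝ) qr.2 ∧
        ∀ x ∈ Ioo (qr.1 : ℝ) qr.2, x ≠ p → h p < h x} := by
    intro p hp
    rw [mem_setOf_eq, eventually_nhdsWithin_iff] at hp
    obtain ⟨l, u, ⟨hl, hu⟩, hlu⟩ := mem_nhds_iff_exists_Ioo_subset.1 hp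
    obtain ⟨q, hq1, hq2⟩ := exists_rat_btwn hl
    obtain ⟨r, hr1, hr2⟩ := exists_rat_btwn hu
    refine mem_iUnion.2 ⟨(q, r), ⟨hq2, hr1⟩, fun x hx hne => ?_⟩
    exact hlu ⟨hq1.trans hx.1, hx.2.trans hr2⟩ hne
  refine (countable_iUnion fun qr => ?_).mono hsub
  apply Set.Subsingleton.countable
  rintro p ⟨hp, hp'⟩ q ⟨hq, hq'⟩
  by_contra hne
  exact lt_asymm (hp' q hq (Ne.symm hne)) (hq' p hp hne)

theorem le_specA (c α β : ℝ) (hc : 0 < c) (hα : c ≤ α) (hβ : c ≤ β) : c ≤ specA α β := by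
  have hpos : 0 < α + β := by linarith
  rw [specA, if_neg hpos.ne', le_div_iff₀ hpos]
  have : c ^ 2 + 1 ≤ Real.sqrt ((α ^ 2 + 1) * (β ^ 2 + 1)) := by
    apply Real.le_sqrt_of_sq_le
    rw [sq (c ^ 2 + 1)]
    gcongr
  nlinarith [mul_nonneg (sub_nonneg.2 hα) (sub_nonneg.2 hβ)]

theorem specA_neg (α β : ℝ) : specA (-α) (-β) = - specA α β := by
  unfold specA
  have : -α + -β = -(α + β) := by ring
  rw [this]
  by_cases h : α + β = 0
  · simp [h]
  · rw [if_neg h, if_neg (neg_ne_zero.2 h), div_neg]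
    simp

theorem one_sided_bound (f : ℝ → ℝ) (a b M : ℝ) (hM : 0 < M)
    (hcont : ContinuousOn f (Set.Ioo a b))
    (hspec : ∀ x ∈ Set.Ioo a b, ∃ d, HasSpecDerivAt f x d ∧ d ≤ M)
    (x₁ : ℝ) (h₁ : x₁ ∈ Ioo a b) (x₂ : ℝ) (h₂ : x₂ ∈ Ioo a b) (hlt : x₁ < x₂) :
    f x₂ - f x₁ ≤ M * (x₂ - x₁) := by
  by_contra! hcon
  have hd : 0 < x₂ - x₁ := sub_pos.2 hlt
  obtain ⟨c, hMc, hc⟩ := exists_between ((lt_div_iff₀ hd).2 hcon)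
  rw [lt_div_iff₀ hd] at hc
  set h : ℝ → ℝ := fun x => f x - c * x with hh
  have hIcc : Icc x₁ x₂ ⊆ Ioo a b := fun x hx =>
    ⟨h₁.1.trans_le hx.1, hx.2.trans_lt h₂.2⟩
  have hhc : ContinuousOn h (Icc x₁ x₂) :=
    (hcont.mono hIcc).sub (by fun_prop)
  have hval : h x₁ < h x₂ := by simp only [hh]; nlinarith
  have hcount := (countable_strict_local_min h).image h
  apply (Cardinal.Real.Ioo_countable_iff (x := h x₁) (y := h x₂)).not.2 (not_le.2 hval)
  refine hcount.mono ?_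
  intro y hy
  have hKc : IsCompact (Icc x₁ x₂ ∩ h ⁻¹' {y}) :=
    isCompact_Icc.of_isClosed_subset
      (hhc.preimage_isClosed_of_isClosed isClosed_Icc isClosed_singleton) inter_subset_left
  have hKn : (Icc x₁ x₂ ∩ h ⁻¹' {y}).Nonempty := by
    obtain ⟨z, hz, hzy⟩ := intermediate_value_Icc hlt.le hhc ⟨hy.1.le, hy.2.le⟩
    exact ⟨z, hz, hzy⟩
  obtain ⟨p, ⟨hpI, hpy⟩, hpmax⟩ := hKc.exists_isGreatest hKn
  have hpy : h p = y := hpy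
  have hp2 : p < x₂ := lt_of_le_of_ne hpI.2 (by rintro rfl; exact hy.2.ne hpy.symm)
  have hright : ∀ x ∈ Ioo p x₂, h p < h x := by
    intro x hx
    by_contra! hle
    have hsub : Icc x x₂ ⊆ Icc x₁ x₂ := Icc_subset_Icc_left (hpI.1.trans hx.1.le)
    obtain ⟨z, hz, hzy⟩ := intermediate_value_Icc hx.2.le (hhc.mono hsub)
      ⟨hle.trans hpy.le, hy.2.le⟩
    have := hpmax ⟨hsub hz, hzy⟩
    linarith [hz.1, hx.1]
  have hr : ∀ᶠ x in 𝓝[>] p, h p < h x := by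
    filter_upwards [Ioo_mem_nhdsGT hp2] with x hx using hright x hx
  obtain ⟨d, ⟨L, α, β, ⟨-, hL, hα, hβ⟩, rfl⟩, hdM⟩ := hspec p (hIcc hpI)
  have hfp : L = f p := by
    have hca : ContinuousAt f p := hcont.continuousAt (isOpen_Ioo.mem_nhds (hIcc hpI))
    exact tendsto_nhds_unique hL (hca.tendsto.mono_left nhdsWithin_le_nhds)
  subst hfp
  have hcα : c ≤ α := by
    refine ge_of_tendsto hα ?_
    filter_upwards [hr, self_mem_nhdsWithin] with x hx hxp
    have hxp : p < x := hxp
    rw [le_div_iff₀ (sub_pos.2 hxp)]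
    simp only [hh] at hx
    linarith
  have hcβ : β < c := by
    by_contra! hle
    linarith [le_specA c α β (hM.trans hMc) hcα hle]
  refine ⟨p, ?_, hpy⟩
  have hl : ∀ᶠ x in 𝓝[<] p, h p < h x := by
    filter_upwards [hβ.eventually_lt_const hcβ, self_mem_nhdsWithin] with x hx hxp
    have hxp : x < p := hxp
    rw [div_lt_iff_of_neg (sub_neg.2 hxp)] at hx
    simp only [hh]
    linarith
  rw [mem_setOf_eq, ← Iio_union_Ioi, nhdsWithin_union, eventually_sup]
  exact ⟨hl, hr⟩

theorem lipschitz_of_bounded_specular_deriv (f : ℝ → ℝ) (a b M : ℝ) (hM : 0 < M)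
    (hcont : ContinuousOn f (Set.Ioo a b))
    (hspec : ∀ x ∈ Set.Ioo a b, ∃ d, HasSpecDerivAt f x d ∧ |d| ≤ M) :
    ∀ x₁ ∈ Set.Ioo a b, ∀ x₂ ∈ Set.Ioo a b, |f x₁ - f x₂| ≤ M * |x₁ - x₂| := by
  have key : ∀ x₁ ∈ Set.Ioo a b, ∀ x₂ ∈ Set.Ioo a b, x₁ < x₂ →
      |f x₁ - f x₂| ≤ M * |x₁ - x₂| := by
    intro x₁ h₁ x₂ h₂ hlt
    have e1 := one_sided_bound f a b M hM hcont
      (fun x hx => (hspec x hx).imp fun d hd => ⟨hd.1, (abs_le.1 hd.2).2⟩) x₁ h₁ x₂ h₂ hlt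
    have e2 := one_sided_bound (fun x => - f x) a b M hM hcont.neg (by
      intro x hx
      obtain ⟨d, ⟨L, α, β, ⟨t1, t2, t3, t4⟩, rfl⟩, hd⟩ := hspec x hx
      have e : (fun z => (- f z - -L) / (z - x)) = fun z => -((f z - L) / (z - x)) := by
        funext z; ring
      refine ⟨- specA α β, ⟨-L, -α, -β, ⟨t1.neg, t2.neg, ?_, ?_⟩, (specA_neg α β).symm⟩, ?_⟩
      · rw [e]; exact t3.neg
      · rw [e]; exact t4.neg
      · linarith [(abs_le.1 hd).1]) x₁ h₁ x₂ h₂ hlt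
    rw [abs_of_neg (sub_neg.2 hlt), abs_le]
    constructor <;> linarith
  intro x₁ h₁ x₂ h₂
  rcases lt_trichotomy x₁ x₂ with hlt | rfl | hlt
  · exact key x₁ h₁ x₂ h₂ hlt
  · simp
  · rw [abs_sub_comm, abs_sub_comm x₁]
    exact key x₂ h₂ x₁ h₁ hlt
end

section
/- Let I ⊆ ℝ be an open interval and f : ℝ → ℝ be continuous on I. Suppose f is specularly differentiable at every point of I and the second order specular derivative f^SS(x) = (f^S)^S(x) exists for all x ∈ I. Then for every x ∈ I, f is differentiable at x and f'(x) = f^S(x). -/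
open Filter Topology Set

theorem aux_specA_comm (α β : ℝ) : specA α β = specA β α := by
  unfold specA
  rw [add_comm β α, mul_comm β α, mul_comm (β ^ 2 + 1)]

theorem aux_specA_neg (α β : ℝ) : specA (-α) (-β) = -specA α β := by
  unfold specA
  by_cases h : α + β = 0
  · rw [if_pos h, if_pos (by linarith)]; simp
  · rw [if_neg h, if_neg (fun h' => h (by linarith))]
    rw [show -α + -β = -(α + β) by ring, div_neg]
    simp

theorem aux_specA_min (α β : ℝ) (hab : α ≤ β) : α ≤ specA α β := by
  unfold specA
  by_cases h : α + β = 0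
  · rw [if_pos h]; linarith
  · rw [if_neg h]
    rcases lt_or_gt_of_ne h with h | h
    · rw [le_div_iff_of_neg h]
      have : Real.sqrt ((α ^ 2 + 1) * (β ^ 2 + 1)) ≤ α ^ 2 + 1 := by
        apply Real.sqrt_le_iff.2
        refine ⟨by positivity, ?_⟩
        have : β ^ 2 ≤ α ^ 2 := by nlinarith
        nlinarith [sq_nonneg α]
      nlinarith
    · rw [le_div_iff₀ h]
      have : α ^ 2 + 1 ≤ Real.sqrt ((α ^ 2 + 1) * (β ^ 2 + 1)) := by
        apply Real.le_sqrt_of_sq_le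
        have : α ^ 2 ≤ β ^ 2 := by nlinarith
        nlinarith [sq_nonneg α]
      nlinarith

theorem aux_specA_or (α β : ℝ) : α ≤ specA α β ∨ β ≤ specA α β := by
  rcases le_total α β with h | h
  · exact Or.inl (aux_specA_min α β h)
  · rw [aux_specA_comm]; exact Or.inr (aux_specA_min β α h)

/-- The set of local minimum values of a real function is countable. -/
theorem aux_countable (h : ℝ → ℝ) : {c | ∃ p, h p = c ∧ IsLocalMin h p}.Countable := by
  have : {c | ∃ p, h p = c ∧ IsLocalMin h p} ⊆ ⋃ q : ℚ × ℚ,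
      {c | ∃ p ∈ Ioo (q.1 : ℝ) q.2, h p = c ∧ ∀ t ∈ Ioo (q.1 : ℝ) q.2, h p ≤ h t} := by
    rintro c ⟨p, hp, hmin⟩
    obtain ⟨l, u, hlu, hs⟩ := mem_nhds_iff_exists_Ioo_subset.1 hmin
    obtain ⟨q1, h1, h1'⟩ := exists_rat_btwn hlu.1
    obtain ⟨q2, h2, h2'⟩ := exists_rat_btwn hlu.2
    refine mem_iUnion.2 ⟨(q1, q2), p, ⟨h1', h2⟩, hp, fun t ht => hs ⟨h1.trans ht.1, ht.2.trans h2'⟩⟩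
  refine Countable.mono this (countable_iUnion fun q => Set.Subsingleton.countable ?_)
  rintro c ⟨p, hp, rfl, hm⟩ d ⟨r, hr, rfl, hm'⟩
  exact le_antisymm (hm r hr) (hm' p hp)

theorem aux_mono (h : ℝ → ℝ) (x y : ℝ) (hxy : x < y) (hc : ContinuousOn h (Icc x y))
    (hd : ∀ p ∈ Ioo x y, ∃ α β, Tendsto (fun t => (h t - h p) / (t - p)) (𝓝[>] p) (𝓝 α) ∧
      Tendsto (fun t => (h t - h p) / (t - p)) (𝓝[<] p) (𝓝 β) ∧ (α < 0 ∨ β < 0)) :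
    h y ≤ h x := by
  by_contra! hlt
  obtain ⟨c, hc1, hcn⟩ : ∃ c ∈ Ioo (h x) (h y), c ∉ {c | ∃ p, h p = c ∧ IsLocalMin h p} := by
    by_contra! hcon
    have : (Ioo (h x) (h y)).Countable := (aux_countable h).mono hcon
    exact (Cardinal.Real.Ioo_countable_iff.1 this).not_gt hlt
  have hcl : IsClosed (Icc x y ∩ h ⁻¹' Iic c) := hc.preimage_isClosed_of_isClosed isClosed_Icc isClosed_Iic
  have hcomp : IsCompact (Icc x y ∩ h ⁻¹' Iic c) :=
    isCompact_Icc.of_isClosed_subset hcl inter_subset_left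
  obtain ⟨p, ⟨hpI, hpc⟩, hpm⟩ := hcomp.exists_isGreatest ⟨x, ⟨le_rfl, hxy.le⟩, hc1.1.le⟩
  have hpc' : h p ≤ c := hpc
  have hpy : p < y := lt_of_le_of_ne hpI.2 (by rintro rfl; exact absurd hc1.2 (not_lt.2 hpc'))
  have hgt : ∀ t ∈ Ioc p y, c < h t := by
    intro t ht
    by_contra! hle
    exact absurd (hpm ⟨⟨hpI.1.trans ht.1.le, ht.2⟩, hle⟩) (not_le.2 ht.1)
  have hpe : h p = c := by
    obtain ⟨t, ht, hte⟩ := intermediate_value_Icc hpy.le (hc.mono (Icc_subset_Icc_left hpI.1))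
      ⟨hpc', hc1.2.le⟩
    rcases eq_or_lt_of_le ht.1 with e | e
    · rw [e]; exact hte
    · exact absurd hte (hgt t ⟨e, ht.2⟩).ne'
  have hpx : x < p := lt_of_le_of_ne hpI.1 (by rintro rfl; exact hc1.1.ne hpe)
  have hr : ∀ᶠ t in 𝓝[>] p, h p < h t := by
    filter_upwards [Ioc_mem_nhdsGT hpy] with t ht
    rw [hpe]; exact hgt t ht
  obtain ⟨α, β, hα, hβ, hor⟩ := hd p ⟨hpx, hpy⟩
  rcases hor with hn | hn
  · obtain ⟨t, h1, h2, h3⟩ := (hr.and ((hα.eventually_lt_const hn).and self_mem_nhdsWithin)).exists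
    have h3 : p < t := h3
    exact absurd h2 (not_lt.2 (div_nonneg (by linarith) (by linarith)))
  · have hl : ∀ᶠ t in 𝓝[<] p, h p < h t := by
      filter_upwards [hβ.eventually_lt_const hn, self_mem_nhdsWithin] with t ht htp
      have htp : t < p := htp
      by_contra! hle
      exact absurd ht (not_lt.2 (div_nonneg_of_nonpos (by linarith) (by linarith)))
    refine hcn ⟨p, hpe, ?_⟩
    have : ∀ᶠ t in 𝓝[≠] p, h p < h t := by
      rw [← Iio_union_Ioi, nhdsWithin_union]
      exact eventually_sup.2 ⟨hl, hr⟩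
    rw [eventually_nhdsWithin_iff] at this
    filter_upwards [this] with t ht
    by_cases e : t = p
    · rw [e]
    · exact (ht e).le

/-- Quasi mean value inequality. -/
theorem aux_slope (f g : ℝ → ℝ) (x y M : ℝ) (hxy : x < y) (hc : ContinuousOn f (Icc x y))
    (hd : ∀ p ∈ Ioo x y, ∃ α β, HasSpecData f p (f p) α β ∧ g p = specA α β)
    (hM : ∀ p ∈ Ioo x y, g p < M) : f y - f x ≤ M * (y - x) := by
  have := aux_mono (fun t => f t - M * t) x y hxy (by fun_prop) ?_
  · linarith
  · intro p hp
    obtain ⟨α, β, ⟨-, -, h1, h2⟩, he⟩ := hd p hp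
    have key : ∀ t, t ≠ p → (f t - f p) / (t - p) - M = (f t - M * t - (f p - M * p)) / (t - p) := by
      intro t ht
      have := sub_ne_zero.2 ht
      field_simp
      ring
    refine ⟨α - M, β - M, ?_, ?_, ?_⟩
    · refine (h1.sub_const M).congr' ?_
      filter_upwards [self_mem_nhdsWithin] with t ht using key t (ne_of_gt ht)
    · refine (h2.sub_const M).congr' ?_
      filter_upwards [self_mem_nhdsWithin] with t ht using key t (ne_of_lt ht)
    · have := hM p hp
      rcases aux_specA_or α β with h | h
      · left; linarith
      · right; linarith

theorem aux_neg (f : ℝ → ℝ) (p L α β : ℝ) (h : HasSpecData f p L α β) :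
    HasSpecData (fun t => -f t) p (-L) (-α) (-β) := by
  obtain ⟨h1, h2, h3, h4⟩ := h
  have key : (fun t => (-f t - -L) / (t - p)) = fun t => -((f t - L) / (t - p)) := by
    funext t; rw [← neg_div]; ring
  refine ⟨h1.neg, h2.neg, ?_, ?_⟩
  · rw [key]; exact h3.neg
  · rw [key]; exact h4.neg

theorem aux_slope2 (f g : ℝ → ℝ) (x y M : ℝ) (hxy : x < y) (hc : ContinuousOn f (Icc x y))
    (hd : ∀ p ∈ Ioo x y, ∃ α β, HasSpecData f p (f p) α β ∧ g p = specA α β)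
    (hM : ∀ p ∈ Ioo x y, M < g p) : M * (y - x) ≤ f y - f x := by
  have := aux_slope (fun t => -f t) (fun t => -g t) x y (-M) hxy hc.neg ?_
    (fun p hp => neg_lt_neg (hM p hp))
  · linarith
  · intro p hp
    obtain ⟨α, β, h, he⟩ := hd p hp
    exact ⟨-α, -β, aux_neg f p _ _ _ h, by rw [aux_specA_neg, he]⟩

theorem aux_final (f g : ℝ → ℝ) (a b : ℝ)
    (hcont : ContinuousOn f (Set.Ioo a b))
    (hspec : ∀ x ∈ Set.Ioo a b, HasSpecDerivAt f x (g x))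
    (hspec2 : ∀ x ∈ Set.Ioo a b, SpecDifferentiableAt g x) :
    ∀ x ∈ Set.Ioo a b, HasDerivAt f (g x) x := by
  have hd : ∀ p ∈ Ioo a b, ∃ α β, HasSpecData f p (f p) α β ∧ g p = specA α β := by
    intro p hp
    obtain ⟨L, α, β, h, he⟩ := hspec p hp
    have hL : L = f p := tendsto_nhds_unique h.1
      ((hcont.continuousAt (Ioo_mem_nhds hp.1 hp.2)).tendsto.mono_left nhdsWithin_le_nhds)
    exact ⟨α, β, hL ▸ h, he⟩
  intro x hx
  obtain ⟨α, β, ⟨-, -, hα, hβ⟩, he⟩ := hd x hx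
  obtain ⟨L, -, -, hgl, hgr, -, -⟩ := hspec2 x hx
  have hsub : ∀ u v, u ∈ Ioo a b → v ∈ Ioo a b → Icc u v ⊆ Ioo a b :=
    fun u v hu hv t ht => ⟨hu.1.trans_le ht.1, ht.2.trans_lt hv.2⟩
  have hαL : α = L := by
    apply le_antisymm
    · apply le_of_forall_gt_imp_ge_of_dense
      intro M hM
      obtain ⟨u, hu, hus⟩ := mem_nhdsGT_iff_exists_Ioo_subset.1 (hgr.eventually_lt_const hM)
      refine le_of_tendsto hα ?_
      filter_upwards [Ioo_mem_nhdsGT hu, Ioo_mem_nhdsGT hx.2] with y hy hyb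
      have hs := hsub x y hx ⟨hx.1.trans hy.1, hyb.2⟩
      rw [div_le_iff₀ (sub_pos.2 hy.1)]
      exact aux_slope f g x y M hy.1 (hcont.mono hs) (fun p hp => hd p (hs (Ioo_subset_Icc_self hp)))
        (fun p hp => hus ⟨hp.1, hp.2.trans hy.2⟩)
    · apply le_of_forall_lt_imp_le_of_dense
      intro M hM
      obtain ⟨u, hu, hus⟩ := mem_nhdsGT_iff_exists_Ioo_subset.1 (hgr.eventually_const_lt hM)
      refine ge_of_tendsto hα ?_
      filter_upwards [Ioo_mem_nhdsGT hu, Ioo_mem_nhdsGT hx.2] with y hy hyb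
      have hs := hsub x y hx ⟨hx.1.trans hy.1, hyb.2⟩
      rw [le_div_iff₀ (sub_pos.2 hy.1)]
      exact aux_slope2 f g x y M hy.1 (hcont.mono hs) (fun p hp => hd p (hs (Ioo_subset_Icc_self hp)))
        (fun p hp => hus ⟨hp.1, hp.2.trans hy.2⟩)
  have hβL : β = L := by
    apply le_antisymm
    · apply le_of_forall_gt_imp_ge_of_dense
      intro M hM
      obtain ⟨u, hu, hus⟩ := mem_nhdsLT_iff_exists_Ioo_subset.1 (hgl.eventually_lt_const hM)
      refine le_of_tendsto hβ ?_
      filter_upwards [Ioo_mem_nhdsLT hu, Ioo_mem_nhdsLT hx.1] with y hy hyb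
      have hs := hsub y x ⟨hyb.1, hy.2.trans hx.2⟩ hx
      rw [← neg_div_neg_eq, neg_sub, neg_sub, div_le_iff₀ (sub_pos.2 hy.2)]
      exact aux_slope f g y x M hy.2 (hcont.mono hs) (fun p hp => hd p (hs (Ioo_subset_Icc_self hp)))
        (fun p hp => hus ⟨hy.1.trans hp.1, hp.2⟩)
    · apply le_of_forall_lt_imp_le_of_dense
      intro M hM
      obtain ⟨u, hu, hus⟩ := mem_nhdsLT_iff_exists_Ioo_subset.1 (hgl.eventually_const_lt hM)
      refine ge_of_tendsto hβ ?_
      filter_upwards [Ioo_mem_nhdsLT hu, Ioo_mem_nhdsLT hx.1] with y hy hyb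
      have hs := hsub y x ⟨hyb.1, hy.2.trans hx.2⟩ hx
      rw [← neg_div_neg_eq, neg_sub, neg_sub, le_div_iff₀ (sub_pos.2 hy.2)]
      exact aux_slope2 f g y x M hy.2 (hcont.mono hs) (fun p hp => hd p (hs (Ioo_subset_Icc_self hp)))
        (fun p hp => hus ⟨hy.1.trans hp.1, hp.2⟩)
  subst hαL
  subst hβL
  have hg : g x = β := by
    rw [he]
    apply le_antisymm
    · have := aux_specA_min (-β) (-β) le_rfl
      rw [aux_specA_neg] at this
      linarith
    · exact aux_specA_min β β le_rfl
  rw [hg, hasDerivAt_iff_tendsto_slope, ← Iio_union_Ioi, nhdsWithin_union]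
  have hs : slope f x = fun t => (f t - f x) / (t - x) := by
    funext t; rw [slope_def_field]
  rw [hs]
  exact hβ.sup hα

theorem differentiable_of_second_order_specular (f g : ℝ → ℝ) (a b : ℝ)
    (hcont : ContinuousOn f (Set.Ioo a b))
    (hspec : ∀ x ∈ Set.Ioo a b, HasSpecDerivAt f x (g x))
    (hspec2 : ∀ x ∈ Set.Ioo a b, SpecDifferentiableAt g x) :
    ∀ x ∈ Set.Ioo a b, HasDerivAt f (g x) x := by
  exact aux_final f g a b hcont hspec hspec2
end

section
/- (Fundamental Theorem of Calculus with specular derivatives) Let a < b and f : ℝ → ℝ. Suppose there is a finite set S ⊂ (a, b) such that f is continuous at every point of [a, b] \ S (one-sidedly at a and b), at every s ∈ S the one-sided limits f(s] and f[s) exist as real numbers, and for every x ∈ (a, b) the hypothesis (H1) holds: f(x) = A(f[x), f(x]). Define F(x) := ∫ₐˣ f(t) dt. Then: (i) F is continuous on [a, b]; (ii) for every x ∈ (a, b), F is specularly differentiable at x with F^S(x) = f(x); and (iii) F^S₊(a) = f(a) and F^S₋(b) = f(b). -/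
open Filter Topology Set

/-- Right side: if `f` tends to `c` at `x` from the right, the integral has right derivative `c`. -/
theorem ftc_specular_right (f : ℝ → ℝ) (a x c : ℝ) (hi : IntervalIntegrable f MeasureTheory.volume a x)
    (hm : StronglyMeasurableAtFilter f (𝓝[>] x) MeasureTheory.volume)
    (h : Tendsto f (𝓝[>] x) (𝓝 c)) :
    Tendsto (fun y => ∫ t in a..y, f t) (𝓝[>] x) (𝓝 (∫ t in a..x, f t)) ∧
    Tendsto (fun y => ((∫ t in a..y, f t) - ∫ t in a..x, f t) / (y - x)) (𝓝[>] x) (𝓝 c) := by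
  have hd : HasDerivWithinAt (fun u => ∫ t in a..u, f t) c (Ici x) x :=
    intervalIntegral.integral_hasDerivWithinAt_of_tendsto_ae_right (t := Ioi x) hi hm
      (h.mono_left inf_le_left)
  have hd' := hd.mono Ioi_subset_Ici_self
  refine ⟨hd'.continuousWithinAt, ?_⟩
  rw [hasDerivWithinAt_iff_tendsto_slope' (by simp)] at hd'
  refine hd'.congr fun y => ?_
  rw [slope_def_field]

/-- Left side: if `f` tends to `c` at `x` from the left, the integral has left derivative `c`. -/
theorem ftc_specular_left (f : ℝ → ℝ) (a x c : ℝ) (hi : IntervalIntegrable f MeasureTheory.volume a x)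
    (hm : StronglyMeasurableAtFilter f (𝓝[≤] x) MeasureTheory.volume)
    (h : Tendsto f (𝓝[<] x) (𝓝 c)) :
    Tendsto (fun y => ∫ t in a..y, f t) (𝓝[<] x) (𝓝 (∫ t in a..x, f t)) ∧
    Tendsto (fun y => ((∫ t in a..y, f t) - ∫ t in a..x, f t) / (y - x)) (𝓝[<] x) (𝓝 c) := by
  have hle : 𝓝[≤] x ⊓ MeasureTheory.ae MeasureTheory.volume ≤ 𝓝[<] x := by
    have h1 : ({x}ᶜ : Set ℝ) ∈ MeasureTheory.ae (MeasureTheory.volume : MeasureTheory.Measure ℝ) := by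
      rw [MeasureTheory.mem_ae_iff]; simp
    have h2 : Iio x = Iic x ∩ {x}ᶜ := by
      ext y; simp [lt_iff_le_and_ne]
    rw [h2, nhdsWithin_inter']
    exact inf_le_inf_left _ (le_principal_iff.2 h1)
  have hd : HasDerivWithinAt (fun u => ∫ t in a..u, f t) c (Iic x) x :=
    intervalIntegral.integral_hasDerivWithinAt_of_tendsto_ae_right (t := Iic x) hi hm
      (h.mono_left hle)
  have hd' := hd.mono Iio_subset_Iic_self
  refine ⟨hd'.continuousWithinAt, ?_⟩
  rw [hasDerivWithinAt_iff_tendsto_slope' (by simp)] at hd'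
  refine hd'.congr fun y => ?_
  rw [slope_def_field]

theorem ftc_specular (f : ℝ → ℝ) (a b : ℝ) (hab : a < b) (S : Finset ℝ)
    (hS : ↑S ⊆ Set.Ioo a b)
    (hcont : ∀ x ∈ Set.Icc a b \ ↑S, ContinuousWithinAt f (Set.Icc a b) x)
    (hjump : ∀ s ∈ S, (∃ l, Tendsto f (𝓝[<] s) (𝓝 l)) ∧
      (∃ r, Tendsto f (𝓝[>] s) (𝓝 r)))
    (hH1 : ∀ x ∈ Set.Ioo a b, ∃ l r, Tendsto f (𝓝[<] x) (𝓝 l) ∧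
      Tendsto f (𝓝[>] x) (𝓝 r) ∧ f x = specA r l) :
    ContinuousOn (fun x => ∫ t in a..x, f t) (Set.Icc a b) ∧
      (∀ x ∈ Set.Ioo a b, HasSpecDerivAt (fun y => ∫ t in a..y, f t) x (f x)) ∧
      (∃ R, Tendsto (fun x => ∫ t in a..x, f t) (𝓝[>] a) (𝓝 R) ∧
        Tendsto (fun x => ((∫ t in a..x, f t) - R) / (x - a)) (𝓝[>] a) (𝓝 (f a))) ∧
      (∃ L, Tendsto (fun x => ∫ t in a..x, f t) (𝓝[<] b) (𝓝 L) ∧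
        Tendsto (fun x => ((∫ t in a..x, f t) - L) / (x - b)) (𝓝[<] b) (𝓝 (f b))) := by
  have hmeas : MeasureTheory.AEStronglyMeasurable f
      (MeasureTheory.volume.restrict (Icc a b)) := by
    have hmS : MeasurableSet (S : Set ℝ) := S.measurableSet
    have h1 : MeasureTheory.AEStronglyMeasurable f
        (MeasureTheory.volume.restrict (Icc a b \ ↑S)) := by
      refine ContinuousOn.aestronglyMeasurable ?_ (measurableSet_Icc.diff hmS)
      exact fun x hx => (hcont x hx).mono sdiff_subset
    have h3 : MeasureTheory.volume.restrict (Icc a b \ ↑S)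
        = MeasureTheory.volume.restrict (Icc a b) := by
      refine MeasureTheory.Measure.restrict_congr_set ?_
      exact MeasureTheory.sdiff_null_ae_eq_self (S.finite_toSet.measure_zero _)
    rwa [h3] at h1
  have hR : ∀ x ∈ Ico a b, ∃ r, Tendsto f (𝓝[>] x) (𝓝 r) ∧ (x = a → r = f a) := by
    intro x hx
    rcases eq_or_lt_of_le hx.1 with rfl | h
    · refine ⟨f a, ?_, fun _ => rfl⟩
      have hc := hcont a ⟨left_mem_Icc.2 hab.le, fun h => (hS h).1.false⟩
      have : 𝓝[>] a ≤ 𝓝[Icc a b] a :=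
        nhdsWithin_le_iff.2 (Icc_mem_nhdsGT hab)
      exact hc.tendsto.mono_left this
    · obtain ⟨l, r, _, hr, _⟩ := hH1 x ⟨h, hx.2⟩
      exact ⟨r, hr, fun h' => absurd h' h.ne'⟩
  have hL : ∀ x ∈ Ioc a b, ∃ r, Tendsto f (𝓝[<] x) (𝓝 r) ∧ (x = b → r = f b) := by
    intro x hx
    rcases eq_or_lt_of_le hx.2 with rfl | h
    · refine ⟨f x, ?_, fun _ => rfl⟩
      have hc := hcont x ⟨right_mem_Icc.2 hab.le, fun h => (hS h).2.false⟩
      have : 𝓝[<] x ≤ 𝓝[Icc a x] x :=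
        nhdsWithin_le_iff.2 (Icc_mem_nhdsLT hab)
      exact hc.tendsto.mono_left this
    · obtain ⟨l, r, hl, _, _⟩ := hH1 x ⟨hx.1, h⟩
      exact ⟨l, hl, fun h' => absurd h' h.ne⟩
  have hmR : ∀ x ∈ Ico a b, StronglyMeasurableAtFilter f (𝓝[>] x) MeasureTheory.volume :=
    fun x hx => ⟨Icc a b, Icc_mem_nhdsGT_of_mem hx, hmeas⟩
  have hmL : ∀ x ∈ Ioc a b, StronglyMeasurableAtFilter f (𝓝[≤] x) MeasureTheory.volume :=
    fun x hx => ⟨Icc a b, Icc_mem_nhdsLE_of_mem hx, hmeas⟩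
  have hint : MeasureTheory.IntegrableOn f (Icc a b) := by
    refine MeasureTheory.LocallyIntegrableOn.integrableOn_isCompact (fun x hx => ?_) isCompact_Icc
    have hsup : 𝓝[Icc a b] x = (𝓝[Icc a b ∩ Iio x] x ⊔ 𝓝[Icc a b ∩ Ioi x] x)
        ⊔ 𝓝[Icc a b ∩ {x}] x := by
      rw [← nhdsWithin_union, ← nhdsWithin_union, ← inter_union_distrib_left,
        ← inter_union_distrib_left]
      congr 1
      ext y
      have := lt_trichotomy y x
      simp only [mem_inter_iff, mem_union, mem_Iio, mem_Ioi, mem_singleton_iff]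
      tauto
    rw [hsup, MeasureTheory.IntegrableAtFilter.sup_iff, MeasureTheory.IntegrableAtFilter.sup_iff]
    refine ⟨⟨?_, ?_⟩, ?_⟩
    · rcases eq_or_lt_of_le hx.1 with rfl | h
      · have : Icc a b ∩ Iio a = ∅ := by
          ext y; simp; intro h1 _; exact h1
        rw [this, nhdsWithin_empty]
        exact ⟨∅, mem_bot, MeasureTheory.integrableOn_empty⟩
      · obtain ⟨r, hr, _⟩ := hL x ⟨h, hx.2⟩
        have := hr.integrableAtFilter (μ := MeasureTheory.volume)
          ((hmL x ⟨h, hx.2⟩).filter_mono (nhdsWithin_mono _ Iio_subset_Iic_self))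
          (MeasureTheory.Measure.finiteAt_nhdsWithin _ _ _)
        exact this.filter_mono (nhdsWithin_mono _ inter_subset_right)
    · rcases eq_or_lt_of_le hx.2 with rfl | h
      · have : Icc a x ∩ Ioi x = ∅ := by
          ext y; simp
        rw [this, nhdsWithin_empty]
        exact ⟨∅, mem_bot, MeasureTheory.integrableOn_empty⟩
      · obtain ⟨r, hr, _⟩ := hR x ⟨hx.1, h⟩
        have := hr.integrableAtFilter (μ := MeasureTheory.volume) (hmR x ⟨hx.1, h⟩)
          (MeasureTheory.Measure.finiteAt_nhdsWithin _ _ _)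
        exact this.filter_mono (nhdsWithin_mono _ inter_subset_right)
    · exact ⟨{x}, mem_of_superset self_mem_nhdsWithin inter_subset_right,
        MeasureTheory.integrableOn_singleton (hx := by rw [Real.volume_singleton]; exact ENNReal.zero_lt_top)⟩
  have hii : ∀ x ∈ Icc a b, IntervalIntegrable f MeasureTheory.volume a x := by
    intro x hx
    rw [intervalIntegrable_iff_integrableOn_Icc_of_le hx.1]
    exact hint.mono_set (Icc_subset_Icc_right hx.2)
  refine ⟨intervalIntegral.continuousOn_primitive_interval (by rwa [uIcc_of_le hab.le]) |>.mono
    (by rw [uIcc_of_le hab.le]), ?_, ?_, ?_⟩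
  · intro x hx
    obtain ⟨l, r, hl, hr, he⟩ := hH1 x hx
    have hi := hii x (Ioo_subset_Icc_self hx)
    obtain ⟨h1, h2⟩ := ftc_specular_left f a x l hi (hmL x (Ioo_subset_Ioc_self hx)) hl
    obtain ⟨h3, h4⟩ := ftc_specular_right f a x r hi (hmR x (Ioo_subset_Ico_self hx)) hr
    exact ⟨_, r, l, ⟨h1, h3, h4, h2⟩, he⟩
  · have ha : a ∈ Ico a b := left_mem_Ico.2 hab
    obtain ⟨r, hr, he⟩ := hR a ha
    rw [he rfl] at hr
    exact ⟨_, ftc_specular_right f a a _ (hii a (Ico_subset_Icc_self ha)) (hmR a ha) hr⟩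
  · have hb : b ∈ Ioc a b := right_mem_Ioc.2 hab
    obtain ⟨r, hr, he⟩ := hL b hb
    rw [he rfl] at hr
    exact ⟨_, ftc_specular_left f a b _ (hii b (Ioc_subset_Icc_self hb)) (hmL b hb) hr⟩
end

section
/- (Existence for the first order linear ODE with specular derivatives) Let U = (a, b) ⊆ ℝ be an open interval, p : ℝ → ℝ continuous on U, S = {s₁ < s₂ < ⋯ < s_k} ⊂ U a finite set, and f : ℝ → ℝ a function that is continuous at every point of U \ S, has a jump discontinuity at each s ∈ S, and whose one-sided limits f(s] and f[s) exist as real numbers at each s ∈ S. Then there exist a function u : ℝ → ℝ continuous on U and values c₁, …, c_k ∈ ℝ such that u is specularly differentiable at every x ∈ U and u^S(x) + p(x)·u(x) = f̄(x) for all x ∈ U, where f̄ agrees with f on U \ S and f̄(sⱼ) = cⱼ for each j. -/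
open Filter Topology Set

theorem aux_specA_self (c : ℝ) : specA c c = c := by
  unfold specA
  have h : Real.sqrt ((c ^ 2 + 1) * (c ^ 2 + 1)) = c ^ 2 + 1 :=
    Real.sqrt_mul_self (by positivity)
  rw [h]
  split_ifs with h0
  · linarith
  · rw [div_eq_iff h0]
    ring

theorem aux_specData (u : ℝ → ℝ) (x α β : ℝ) (hr : HasDerivWithinAt u α (Ici x) x)
    (hl : HasDerivWithinAt u β (Iic x) x) : HasSpecData u x (u x) α β := by
  have hr' := hr.mono Ioi_subset_Ici_self
  have hl' := hl.mono Iio_subset_Iic_self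
  refine ⟨hl'.continuousWithinAt, hr'.continuousWithinAt, ?_, ?_⟩
  · have := (hasDerivWithinAt_iff_tendsto_slope' (by simp)).1 hr'
    refine this.congr fun y => ?_
    rw [slope_def_field]
  · have := (hasDerivWithinAt_iff_tendsto_slope' (by simp)).1 hl'
    refine this.congr fun y => ?_
    rw [slope_def_field]

open MeasureTheory in
theorem aux_left_le (x : ℝ) : 𝓝[≤] x ⊓ ae (volume : Measure ℝ) ≤ 𝓝[<] x := by
  have h : ({x}ᶜ : Set ℝ) ∈ ae (volume : Measure ℝ) := by
    rw [mem_ae_iff]; simp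
  calc 𝓝[≤] x ⊓ ae (volume : Measure ℝ) ≤ 𝓝[≤] x ⊓ 𝓟 {x}ᶜ :=
        inf_le_inf_left _ (le_principal_iff.2 h)
    _ = 𝓝[<] x := by
        rw [nhdsWithin, nhdsWithin, inf_assoc, inf_principal]
        congr 2
        ext y
        simp [lt_iff_le_and_ne]

open MeasureTheory in
theorem aux_locInt (a b : ℝ) (g l r : ℝ → ℝ)
    (hm : AEStronglyMeasurable g (volume.restrict (Ioo a b)))
    (hl : ∀ x ∈ Ioo a b, Tendsto g (𝓝[<] x) (𝓝 (l x)))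
    (hr : ∀ x ∈ Ioo a b, Tendsto g (𝓝[>] x) (𝓝 (r x))) :
    LocallyIntegrableOn g (Ioo a b) := by
  intro x hx
  have hU : Ioo a b ∈ 𝓝 x := isOpen_Ioo.mem_nhds hx
  have hfin : ∀ s, (volume : Measure ℝ).FiniteAtFilter (𝓝[s] x) := fun s =>
    volume.finiteAt_nhdsWithin x s
  have h1 : IntegrableAtFilter g (𝓝[<] x) volume :=
    Measure.FiniteAtFilter.integrableAtFilter_of_tendsto
      ⟨Ioo a b, mem_nhdsWithin_of_mem_nhds hU, hm⟩ (hfin _) (hl x hx)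
  have h2 : IntegrableAtFilter g (𝓝[>] x) volume :=
    Measure.FiniteAtFilter.integrableAtFilter_of_tendsto
      ⟨Ioo a b, mem_nhdsWithin_of_mem_nhds hU, hm⟩ (hfin _) (hr x hx)
  have h3 : IntegrableAtFilter g (pure x) volume :=
    ⟨{x}, by simp, by simp⟩
  have h4 : IntegrableAtFilter g (𝓝 x) volume := by
    rw [← nhdsNE_sup_pure, ← nhdsLT_sup_nhdsGT]
    exact IntegrableAtFilter.sup_iff.2 ⟨IntegrableAtFilter.sup_iff.2 ⟨h1, h2⟩, h3⟩
  exact h4.filter_mono nhdsWithin_le_nhds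

open MeasureTheory in
/-- One-sided derivatives of a primitive -/
theorem aux_prim (a b x₀ : ℝ) (hx₀ : x₀ ∈ Ioo a b) (g l r : ℝ → ℝ)
    (hm : AEStronglyMeasurable g (volume.restrict (Ioo a b)))
    (hl : ∀ x ∈ Ioo a b, Tendsto g (𝓝[<] x) (𝓝 (l x)))
    (hr : ∀ x ∈ Ioo a b, Tendsto g (𝓝[>] x) (𝓝 (r x))) :
    ∀ x ∈ Ioo a b, HasDerivWithinAt (fun y => ∫ t in x₀..y, g t) (r x) (Ici x) x ∧
      HasDerivWithinAt (fun y => ∫ t in x₀..y, g t) (l x) (Iic x) x := by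
  intro x hx
  have hU : Ioo a b ∈ 𝓝 x := isOpen_Ioo.mem_nhds hx
  have hint : IntervalIntegrable g volume x₀ x := by
    rw [intervalIntegrable_iff']
    exact (aux_locInt a b g l r hm hl hr).integrableOn_compact_subset
      (ordConnected_Ioo.uIcc_subset hx₀ hx) isCompact_uIcc
  have hmeas : ∀ s, StronglyMeasurableAtFilter g (𝓝[s] x) volume := fun s =>
    ⟨Ioo a b, mem_nhdsWithin_of_mem_nhds hU, hm⟩
  exact ⟨intervalIntegral.integral_hasDerivWithinAt_of_tendsto_ae_right hint
      (s := Ici x) (t := Ioi x) (hmeas _) ((hr x hx).mono_left inf_le_left),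
    intervalIntegral.integral_hasDerivWithinAt_of_tendsto_ae_right hint
      (s := Iic x) (t := Iic x) (hmeas _) ((hl x hx).mono_left (aux_left_le x))⟩

theorem linear_ode_specular_existence (a b : ℝ) (hab : a < b) (p f : ℝ → ℝ)
    (hp : ContinuousOn p (Set.Ioo a b)) (S : Finset ℝ) (hS : ↑S ⊆ Set.Ioo a b)
    (hcont : ∀ x ∈ Set.Ioo a b, x ∉ S → ContinuousAt f x)
    (hjump : ∀ s ∈ S, ∃ l r : ℝ, Tendsto f (𝓝[<] s) (𝓝 l) ∧
      Tendsto f (𝓝[>] s) (𝓝 r) ∧ l ≠ r) :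
    ∃ u fbar : ℝ → ℝ, (∀ x, x ∉ S → fbar x = f x) ∧
      ContinuousOn u (Set.Ioo a b) ∧
      ∀ x ∈ Set.Ioo a b, ∃ d, HasSpecDerivAt u x d ∧ d + p x * u x = fbar x := by
  classical
  have hlr : ∀ x, ∃ l r : ℝ, x ∈ Ioo a b → Tendsto f (𝓝[<] x) (𝓝 l) ∧
      Tendsto f (𝓝[>] x) (𝓝 r) ∧ (x ∉ S → l = f x ∧ r = f x) := by
    intro x
    by_cases hx : x ∈ S
    · obtain ⟨l, r, h1, h2, -⟩ := hjump x hx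
      exact ⟨l, r, fun _ => ⟨h1, h2, fun h => absurd hx h⟩⟩
    · exact ⟨f x, f x, fun hU => ⟨(hcont x hU hx).mono_left nhdsWithin_le_nhds,
        (hcont x hU hx).mono_left nhdsWithin_le_nhds, fun _ => ⟨rfl, rfl⟩⟩⟩
  choose l r hlr using hlr
  have hfm : MeasureTheory.AEStronglyMeasurable f
      (MeasureTheory.volume.restrict (Ioo a b)) := by
    have hae : (Ioo a b \ (S : Set ℝ) : Set ℝ) =ᵐ[MeasureTheory.volume] Ioo a b :=
      MeasureTheory.sdiff_null_ae_eq_self (S.finite_toSet.measure_zero _)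
    rw [← MeasureTheory.Measure.restrict_congr_set hae]
    refine ContinuousOn.aestronglyMeasurable (fun x hx => ?_)
      (measurableSet_Ioo.diff S.finite_toSet.measurableSet)
    exact (hcont x hx.1 (by simpa using hx.2)).continuousWithinAt
  obtain ⟨x₀, hx₀⟩ : ∃ x₀, x₀ ∈ Ioo a b := nonempty_Ioo.2 hab
  have hpc : ∀ x ∈ Ioo a b, ContinuousAt p x := fun x hx =>
    hp.continuousAt (isOpen_Ioo.mem_nhds hx)
  have hP := aux_prim a b x₀ hx₀ p p p (hp.aestronglyMeasurable measurableSet_Ioo)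
    (fun x hx => (hpc x hx).mono_left nhdsWithin_le_nhds)
    (fun x hx => (hpc x hx).mono_left nhdsWithin_le_nhds)
  set P : ℝ → ℝ := fun y => ∫ t in x₀..y, p t with hPdef
  have hPd : ∀ x ∈ Ioo a b, HasDerivAt P (p x) x := by
    intro x hx
    have := (hP x hx).2.union (hP x hx).1
    rwa [Iic_union_Ici, hasDerivWithinAt_univ] at this
  have hEc : ∀ x ∈ Ioo a b, ContinuousAt (fun y => Real.exp (P y)) x := fun x hx =>
    (hPd x hx).exp.continuousAt
  have hQ := aux_prim a b x₀ hx₀ (fun y => Real.exp (P y) * f y)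
    (fun x => Real.exp (P x) * l x) (fun x => Real.exp (P x) * r x)
    ((ContinuousOn.aestronglyMeasurable
      (fun x hx => (hEc x hx).continuousWithinAt) measurableSet_Ioo).mul hfm)
    (fun x hx => ((hEc x hx).mono_left nhdsWithin_le_nhds).mul (hlr x hx).1)
    (fun x hx => ((hEc x hx).mono_left nhdsWithin_le_nhds).mul (hlr x hx).2.1)
  set Q : ℝ → ℝ := fun y => ∫ t in x₀..y, Real.exp (P t) * f t with hQdef
  set u : ℝ → ℝ := fun y => Real.exp (-P y) * Q y with hu
  have hstep : ∀ (s : Set ℝ) (x c : ℝ), x ∈ Ioo a b →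
      HasDerivWithinAt Q (Real.exp (P x) * c) s x →
      HasDerivWithinAt u (c - p x * u x) s x := by
    intro s x c hx h
    have h1 := ((hPd x hx).neg.exp.hasDerivWithinAt (s := s)).mul h
    refine h1.congr_deriv ?_
    have : Real.exp (-P x) * Real.exp (P x) = 1 := by rw [← Real.exp_add]; simp
    simp only [hu, Pi.neg_apply]
    linear_combination c * this
  have hR := fun x hx => hstep (Ici x) x (r x) hx (hQ x hx).1
  have hL := fun x hx => hstep (Iic x) x (l x) hx (hQ x hx).2
  refine ⟨u, fun x => if x ∈ S then
    specA (r x - p x * u x) (l x - p x * u x) + p x * u x else f x,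
    fun x hx => if_neg hx, fun x hx => ?_, fun x hx => ?_⟩
  · have := (hL x hx).continuousWithinAt.union (hR x hx).continuousWithinAt
    rw [Iic_union_Ici, continuousWithinAt_univ] at this
    exact this.continuousWithinAt
  · refine ⟨_, ⟨u x, _, _, aux_specData u x _ _ (hR x hx) (hL x hx), rfl⟩, ?_⟩
    by_cases hxS : x ∈ S
    · simp only [if_pos hxS]
    · obtain ⟨e1, e2⟩ := (hlr x hx).2.2 hxS
      simp only [if_neg hxS]
      rw [e1, e2, aux_specA_self]
      ring
end

section
/- (Uniqueness for the first order linear ODE with specular derivatives) Let U = (a, b) ⊆ ℝ be an open interval, p : ℝ → ℝ continuous on U, S = {s₁ < s₂ < ⋯ < s_k} ⊂ U a finite set, and f : ℝ → ℝ a function that is continuous at every point of U \ S, has a jump discontinuity at each s ∈ S, and whose one-sided limits f(s] and f[s) exist as real numbers at each s ∈ S. Fix x₀ ∈ U \ S and y₀ ∈ ℝ. Then there is exactly one function u : U → ℝ that is continuous on U, satisfies u(x₀) = y₀, and for which there exist values c₁, …, c_k ∈ ℝ such that u is specularly differentiable at every x ∈ U and u^S(x) + p(x)·u(x) = f̄(x)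 for all x ∈ U, where f̄ agrees with f on U \ S and f̄(sⱼ) = cⱼ for each j. -/
open Filter Topology Set

theorem specA_self (d : ℝ) : specA d d = d := by
  unfold specA
  split_ifs with h
  · linarith
  · have hR : Real.sqrt ((d ^ 2 + 1) * (d ^ 2 + 1)) = d ^ 2 + 1 :=
      Real.sqrt_mul_self (by positivity)
    rw [hR, div_eq_iff h]; ring

theorem specA_between (α β : ℝ) :
    (α - specA α β ≤ 0 ∨ β - specA α β ≤ 0) ∧ (0 ≤ α - specA α β ∨ 0 ≤ β - specA α β) := by
  unfold specA
  split_ifs with h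
  · constructor
    · by_contra! hc; linarith [hc.1, hc.2]
    · by_contra! hc; linarith [hc.1, hc.2]
  · set R := Real.sqrt ((α ^ 2 + 1) * (β ^ 2 + 1)) with hR
    have hR2 : R * R = (α ^ 2 + 1) * (β ^ 2 + 1) := Real.mul_self_sqrt (by positivity)
    have hR0 : 0 < R := Real.sqrt_pos.2 (by positivity)
    have ha : 0 < α ^ 2 + 1 := by positivity
    have hb : 0 < β ^ 2 + 1 := by positivity
    have e1 : α - (α * β - 1 + R) / (α + β) = (α ^ 2 + 1 - R) / (α + β) := by
      field_simp; ring
    have e2 : β - (α * β - 1 + R) / (α + β) = (β ^ 2 + 1 - R) / (α + β) := by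
      field_simp; ring
    rw [e1, e2]
    have k1 : ¬ (R < α ^ 2 + 1 ∧ R < β ^ 2 + 1) := by
      rintro ⟨h1, h2⟩
      have := mul_lt_mul h1 h2.le hR0 ha.le
      linarith
    have k2 : ¬ (α ^ 2 + 1 < R ∧ β ^ 2 + 1 < R) := by
      rintro ⟨h1, h2⟩
      have := mul_lt_mul h1 h2.le hb hR0.le
      linarith
    rcases lt_or_gt_of_ne h with hs | hs
    · constructor
      · by_contra! hc
        rw [div_pos_iff, div_pos_iff] at hc
        exact k2 ⟨by rcases hc.1 with q | q <;> linarith [q.1, q.2],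
          by rcases hc.2 with q | q <;> linarith [q.1, q.2]⟩
      · by_contra! hc
        rw [div_neg_iff, div_neg_iff] at hc
        exact k1 ⟨by rcases hc.1 with q | q <;> linarith [q.1, q.2],
          by rcases hc.2 with q | q <;> linarith [q.1, q.2]⟩
    · constructor
      · by_contra! hc
        rw [div_pos_iff_of_pos_right hs, div_pos_iff_of_pos_right hs] at hc
        exact k1 ⟨by linarith [hc.1], by linarith [hc.2]⟩
      · by_contra! hc
        rw [div_neg_iff, div_neg_iff] at hc
        exact k2 ⟨by rcases hc.1 with q | q <;> linarith [q.1, q.2],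
          by rcases hc.2 with q | q <;> linarith [q.1, q.2]⟩

theorem spec_mono (h : ℝ → ℝ) (S : Finset ℝ) (x y : ℝ) (hxy : x ≤ y)
    (hc : ContinuousOn h (Icc x y))
    (hd : ∀ c ∈ Ioo x y, c ∉ S → ∃ α β, HasDerivWithinAt h α (Ioi c) c ∧
      HasDerivWithinAt h β (Iio c) c ∧ (α ≤ 0 ∨ β ≤ 0)) : h y ≤ h x := by
  by_contra! hlt
  have hne : x ≠ y := by rintro rfl; exact lt_irrefl _ hlt
  have hxy' : 0 < y - x := sub_pos.2 (lt_of_le_of_ne hxy hne)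
  obtain ⟨ε, hε, hε2⟩ : ∃ ε > 0, h x < h y - ε * (y - x) := by
    refine ⟨(h y - h x) / (2 * (y - x)), by apply div_pos <;> linarith, ?_⟩
    have : (h y - h x) / (2 * (y - x)) * (y - x) = (h y - h x) / 2 := by field_simp
    rw [this]; linarith
  set g : ℝ → ℝ := fun z => h z - ε * (z - x) with hg
  have hgc : ContinuousOn g (Icc x y) := hc.sub (by fun_prop)
  have hgx : g x = h x := by simp [hg]
  have hgy : h x < g y := hε2
  obtain ⟨k, ⟨hk1, hk2⟩, hkS⟩ :=
    ((Ioo_infinite hgy).sdiff (S.finite_toSet.image g)).nonempty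
  set T : Set ℝ := {z | z ∈ Icc x y ∧ k < g z} with hT
  have hyT : y ∈ T := ⟨⟨hxy, le_rfl⟩, hk2⟩
  have hTb : BddBelow T := ⟨x, fun z hz => hz.1.1⟩
  set c := sInf T with hcdef
  have hcT : c ∈ closure T := csInf_mem_closure ⟨y, hyT⟩ hTb
  have hcle : ∀ z ∈ T, c ≤ z := fun z hz => csInf_le hTb hz
  have hcx : x ≤ c := le_csInf ⟨y, hyT⟩ fun z hz => hz.1.1
  have hcy : c ≤ y := hcle y hyT
  have hgcc : ContinuousWithinAt g (Icc x y) c := hgc c ⟨hcx, hcy⟩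
  have hTsub : T ⊆ Icc x y := fun z hz => hz.1
  have hNB : (𝓝[T] c).NeBot := mem_closure_iff_nhdsWithin_neBot.1 hcT
  have hkc : k ≤ g c := ge_of_tendsto (hgcc.mono hTsub)
    (eventually_nhdsWithin_of_forall fun z hz => hz.2.le)
  have hcx' : x < c := by
    rcases hcx.eq_or_lt with e | e
    · rw [← e, hgx] at hkc; linarith
    · exact e
  have hleft : ∀ z ∈ Ico x c, g z ≤ k := by
    intro z hz
    by_contra! hz2
    exact absurd (hcle z ⟨⟨hz.1, hz.2.le.trans hcy⟩, hz2⟩) (not_le.2 hz.2)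
  have hevl : ∀ᶠ z in 𝓝[<] c, z ∈ Ico x c := Ico_mem_nhdsLT hcx'
  have hck : g c ≤ k := by
    have h1 : Tendsto g (𝓝[Ico x c] c) (𝓝 (g c)) :=
      hgcc.mono fun z hz => ⟨hz.1, hz.2.le.trans hcy⟩
    have : (𝓝[Ico x c] c).NeBot := by
      rw [nhdsWithin_Ico_eq_nhdsLT hcx']; infer_instance
    exact le_of_tendsto h1 (eventually_nhdsWithin_of_forall hleft)
  have hgk : g c = k := le_antisymm hck hkc
  have hcy' : c < y := by
    rcases hcy.eq_or_lt with e | e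
    · rw [e] at hck; linarith
    · exact e
  have hcS : c ∉ S := fun hc' => hkS ⟨c, hc', hgk⟩
  obtain ⟨α, β, h1, h2, h3⟩ := hd c ⟨hcx', hcy'⟩ hcS
  have hlin : ∀ s, HasDerivWithinAt (fun z => ε * (z - x)) ε s c := by
    intro s
    simpa using (((hasDerivAt_id c).sub_const x).const_mul ε).hasDerivWithinAt
  have g1 : HasDerivWithinAt g (α - ε) (Ioi c) c := h1.sub (hlin _)
  have g2 : HasDerivWithinAt g (β - ε) (Iio c) c := h2.sub (hlin _)
  rw [hasDerivWithinAt_iff_tendsto_slope' (by simp), slope_fun_def_field] at g1 g2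
  have hTI : T ⊆ Ioi c := by
    intro z hz
    refine lt_of_le_of_ne (hcle z hz) ?_
    rintro rfl
    exact absurd hz.2 (not_lt.2 hck)
  have p1 : 0 ≤ α - ε := by
    refine ge_of_tendsto (g1.mono_left (nhdsWithin_mono _ hTI))
      (eventually_nhdsWithin_of_forall fun z hz => ?_)
    have := hTI hz
    exact div_nonneg (by linarith [hz.2]) (by linarith [mem_Ioi.1 this])
  have p2 : 0 ≤ β - ε := by
    refine ge_of_tendsto g2 ?_
    filter_upwards [hevl] with z hz
    exact div_nonneg_of_nonpos (by linarith [hleft z hz]) (by linarith [hz.2])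
  rcases h3 with h3 | h3 <;> linarith

theorem piecewise_ftc (a b : ℝ) (g l r : ℝ → ℝ) (S : Finset ℝ)
    (hcont : ∀ x ∈ Ioo a b, x ∉ S → ContinuousAt g x)
    (hl : ∀ x ∈ Ioo a b, Tendsto g (𝓝[<] x) (𝓝 (l x)))
    (hr : ∀ x ∈ Ioo a b, Tendsto g (𝓝[>] x) (𝓝 (r x)))
    (x₀ : ℝ) (hx₀ : x₀ ∈ Ioo a b) (x : ℝ) (hx : x ∈ Ioo a b) :
    HasDerivWithinAt (fun z => ∫ t in x₀..z, g t) (r x) (Ici x) x ∧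
    HasDerivWithinAt (fun z => ∫ t in x₀..z, g t) (l x) (Iic x) x := by
  have hmeas : MeasureTheory.AEStronglyMeasurable g
      (MeasureTheory.volume.restrict (Ioo a b)) := by
    have h1 : ContinuousOn g (Ioo a b \ (S : Set ℝ)) := fun z hz =>
      (hcont z hz.1 hz.2).continuousWithinAt
    have h2 := h1.aestronglyMeasurable (μ := MeasureTheory.volume)
      (measurableSet_Ioo.diff S.measurableSet)
    have h3 : MeasureTheory.volume.restrict (Ioo a b \ (S : Set ℝ)) =
        MeasureTheory.volume.restrict (Ioo a b) :=
      MeasureTheory.Measure.restrict_congr_set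
        (MeasureTheory.sdiff_null_ae_eq_self (S.finite_toSet.measure_zero _))
    rwa [h3] at h2
  have hsm : ∀ z ∈ Ioo a b, ∀ s, StronglyMeasurableAtFilter g (𝓝[s] z) := fun z hz s =>
    ⟨Ioo a b, nhdsWithin_le_nhds (isOpen_Ioo.mem_nhds hz), hmeas⟩
  have hloc : MeasureTheory.LocallyIntegrableOn g (Ioo a b) := by
    intro z hz
    have i1 := (hl z hz).integrableAtFilter (μ := MeasureTheory.volume) (hsm z hz _)
      (MeasureTheory.Measure.finiteAt_nhdsWithin _ _ _)
    have i2 := (hr z hz).integrableAtFilter (μ := MeasureTheory.volume) (hsm z hz _)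
      (MeasureTheory.Measure.finiteAt_nhdsWithin _ _ _)
    have i3 : MeasureTheory.IntegrableAtFilter g (𝓝[≠] z) := by
      rw [← Iio_union_Ioi, nhdsWithin_union]
      exact MeasureTheory.IntegrableAtFilter.sup_iff.2 ⟨i1, i2⟩
    obtain ⟨s, hs, hi⟩ := i3
    have hz' : insert z s ∈ 𝓝 z := by
      rw [← pure_sup_nhdsNE z]
      exact ⟨mem_insert z s, mem_of_superset hs (subset_insert z s)⟩
    refine ⟨insert z s, nhdsWithin_le_nhds hz', ?_⟩
    rw [insert_eq]
    exact (MeasureTheory.integrableOn_singleton (hx := by simp)).union hi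
  have hint : IntervalIntegrable g MeasureTheory.volume x₀ x := by
    rw [intervalIntegrable_iff']
    exact hloc.integrableOn_compact_subset
      (ordConnected_Ioo.uIcc_subset hx₀ hx) isCompact_uIcc
  constructor
  · exact intervalIntegral.integral_hasDerivWithinAt_of_tendsto_ae_right hint
      (t := Ioi x) (hsm x hx _) ((hr x hx).mono_left inf_le_left)
  · refine intervalIntegral.integral_hasDerivWithinAt_of_tendsto_ae_right hint
      (t := Iic x) (hsm x hx _) ((hl x hx).mono_left ?_)
    intro t ht
    obtain ⟨o, ho, hot⟩ := mem_nhdsWithin_iff_exists_mem_nhds_inter.1 ht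
    have hx' : ({x}ᶜ : Set ℝ) ∈
        MeasureTheory.ae (MeasureTheory.volume : MeasureTheory.Measure ℝ) := by
      simp [MeasureTheory.mem_ae_iff]
    have hx'' : o ∩ Iic x ∈ 𝓝[≤] x := inter_mem (mem_nhdsWithin_of_mem_nhds ho) self_mem_nhdsWithin
    refine mem_of_superset (inter_mem_inf hx'' hx') ?_
    rintro z ⟨⟨h1, h2⟩, h3⟩
    exact hot ⟨h1, lt_of_le_of_ne h2 h3⟩

theorem ftc_cont (a b : ℝ) (p : ℝ → ℝ) (hp : ContinuousOn p (Ioo a b))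
    (x₀ : ℝ) (hx₀ : x₀ ∈ Ioo a b) (x : ℝ) (hx : x ∈ Ioo a b) :
    HasDerivAt (fun z => ∫ t in x₀..z, p t) (p x) x := by
  have hc : ∀ x ∈ Ioo a b, ContinuousAt p x := fun x hx =>
    hp.continuousAt (isOpen_Ioo.mem_nhds hx)
  obtain ⟨h1, h2⟩ := piecewise_ftc a b p p p ∅ (fun x hx _ => hc x hx)
    (fun x hx => (hc x hx).tendsto.mono_left nhdsWithin_le_nhds)
    (fun x hx => (hc x hx).tendsto.mono_left nhdsWithin_le_nhds) x₀ hx₀ x hx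
  have := h2.union h1
  rwa [Iic_union_Ici, hasDerivWithinAt_univ] at this

theorem linear_ode_specular_uniqueness (a b : ℝ) (hab : a < b) (p f : ℝ → ℝ)
    (hp : ContinuousOn p (Set.Ioo a b)) (S : Finset ℝ) (hS : ↑S ⊆ Set.Ioo a b)
    (hcont : ∀ x ∈ Set.Ioo a b, x ∉ S → ContinuousAt f x)
    (hjump : ∀ s ∈ S, ∃ l r : ℝ, Tendsto f (𝓝[<] s) (𝓝 l) ∧
      Tendsto f (𝓝[>] s) (𝓝 r) ∧ l ≠ r)
    (x₀ y₀ : ℝ) (hx₀ : x₀ ∈ Set.Ioo a b) (hx₀S : x₀ ∉ S) :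
    ∃ u : ℝ → ℝ,
      (ContinuousOn u (Set.Ioo a b) ∧ u x₀ = y₀ ∧
        ∃ fbar : ℝ → ℝ, (∀ x, x ∉ S → fbar x = f x) ∧
          ∀ x ∈ Set.Ioo a b, ∃ d, HasSpecDerivAt u x d ∧ d + p x * u x = fbar x) ∧
      ∀ v : ℝ → ℝ,
        (ContinuousOn v (Set.Ioo a b) ∧ v x₀ = y₀ ∧
          ∃ fbar : ℝ → ℝ, (∀ x, x ∉ S → fbar x = f x) ∧
            ∀ x ∈ Set.Ioo a b, ∃ d, HasSpecDerivAt v x d ∧ d + p x * v x = fbar x) →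
        ∀ x ∈ Set.Ioo a b, v x = u x := by
  have hlr : ∀ x ∈ Ioo a b, ∃ l r : ℝ, Tendsto f (𝓝[<] x) (𝓝 l) ∧
      Tendsto f (𝓝[>] x) (𝓝 r) ∧ (x ∉ S → l = f x ∧ r = f x) := by
    intro x hx
    by_cases h : x ∈ S
    · obtain ⟨l, r, h1, h2, -⟩ := hjump x h
      exact ⟨l, r, h1, h2, fun h' => absurd h h'⟩
    · exact ⟨f x, f x, (hcont x hx h).tendsto.mono_left nhdsWithin_le_nhds,
        (hcont x hx h).tendsto.mono_left nhdsWithin_le_nhds, fun _ => ⟨rfl, rfl⟩⟩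
  choose! l r hl hr hlrS using hlr
  set P : ℝ → ℝ := fun z => ∫ t in x₀..z, p t with hP
  have hPd : ∀ x ∈ Ioo a b, HasDerivAt P (p x) x := fun x hx => ftc_cont a b p hp x₀ hx₀ x hx
  have hEc : ∀ x ∈ Ioo a b, ContinuousAt (fun z => Real.exp (P z)) x := fun x hx =>
    (hPd x hx).continuousAt.rexp
  set G : ℝ → ℝ := fun z => ∫ t in x₀..z, Real.exp (P t) * f t with hG
  have hGd := piecewise_ftc a b (fun t => Real.exp (P t) * f t)
    (fun t => Real.exp (P t) * l t) (fun t => Real.exp (P t) * r t) S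
    (fun x hx hxS => (hEc x hx).mul (hcont x hx hxS))
    (fun x hx => ((hEc x hx).tendsto.mono_left nhdsWithin_le_nhds).mul (hl x hx))
    (fun x hx => ((hEc x hx).tendsto.mono_left nhdsWithin_le_nhds).mul (hr x hx)) x₀ hx₀
  set u : ℝ → ℝ := fun z => Real.exp (-P z) * (y₀ + G z) with hu
  have key : ∀ x ∈ Ioo a b, ∀ s m, HasDerivWithinAt G (Real.exp (P x) * m) s x →
      HasDerivWithinAt u (m - p x * u x) s x := by
    intro x hx s m hm
    have h1 := ((hPd x hx).neg.exp.hasDerivWithinAt (s := s)).mul (hm.const_add y₀)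
    refine h1.congr_deriv ?_
    have : Real.exp (-P x) * Real.exp (P x) = 1 := by rw [← Real.exp_add]; simp
    simp only [hu, Pi.neg_apply]
    linear_combination m * this
  have hur : ∀ x ∈ Ioo a b, HasDerivWithinAt u (r x - p x * u x) (Ici x) x := fun x hx =>
    key x hx _ _ (hGd x hx).1
  have hul : ∀ x ∈ Ioo a b, HasDerivWithinAt u (l x - p x * u x) (Iic x) x := fun x hx =>
    key x hx _ _ (hGd x hx).2
  have huc : ∀ x ∈ Ioo a b, ContinuousAt u x := fun x hx =>
    continuousAt_iff_continuous_left_right.2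
      ⟨(hul x hx).continuousWithinAt, (hur x hx).continuousWithinAt⟩
  have hu0 : u x₀ = y₀ := by simp [hu, hP, hG]
  refine ⟨u, ⟨fun x hx => (huc x hx).continuousWithinAt, hu0,
    fun x => if x ∈ S then specA (r x - p x * u x) (l x - p x * u x) + p x * u x else f x,
    fun x hx => by simp [hx], ?_⟩, ?_⟩
  · intro x hx
    refine ⟨_, ⟨u x, r x - p x * u x, l x - p x * u x,
      ⟨(huc x hx).tendsto.mono_left nhdsWithin_le_nhds,
        (huc x hx).tendsto.mono_left nhdsWithin_le_nhds, ?_, ?_⟩, rfl⟩, ?_⟩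
    · have := (hur x hx).mono Ioi_subset_Ici_self
      rwa [hasDerivWithinAt_iff_tendsto_slope' (by simp), slope_fun_def_field] at this
    · have := (hul x hx).mono Iio_subset_Iic_self
      rwa [hasDerivWithinAt_iff_tendsto_slope' (by simp), slope_fun_def_field] at this
    · by_cases h : x ∈ S
      · simp [h]
      · obtain ⟨e1, e2⟩ := hlrS x hx h
        simp [h, e1, e2, specA_self]
  · rintro v ⟨hvc, hv0, fbar, hfb, hv⟩
    have hvc' : ∀ x ∈ Ioo a b, ContinuousAt v x := fun x hx =>
      hvc.continuousAt (isOpen_Ioo.mem_nhds hx)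
    set h : ℝ → ℝ := fun z => Real.exp (P z) * (v z - u z) with hh
    have hhc : ∀ x ∈ Ioo a b, ContinuousAt h x := fun x hx =>
      (hEc x hx).mul ((hvc' x hx).sub (huc x hx))
    have hhd : ∀ c ∈ Ioo a b, c ∉ S → ∃ α β, HasDerivWithinAt h α (Ioi c) c ∧
        HasDerivWithinAt h β (Iio c) c ∧ (α ≤ 0 ∨ β ≤ 0) ∧ (0 ≤ α ∨ 0 ≤ β) := by
      intro c hc hcS
      obtain ⟨d, ⟨L, α, β, ⟨d1, d2, d3, d4⟩, hd⟩, hde⟩ := hv c hc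
      have hL : L = v c := tendsto_nhds_unique d1
        ((hvc' c hc).tendsto.mono_left nhdsWithin_le_nhds)
      subst hL
      have v1 : HasDerivWithinAt v α (Ioi c) c := by
        rwa [hasDerivWithinAt_iff_tendsto_slope' (by simp), slope_fun_def_field]
      have v2 : HasDerivWithinAt v β (Iio c) c := by
        rwa [hasDerivWithinAt_iff_tendsto_slope' (by simp), slope_fun_def_field]
      obtain ⟨e1, e2⟩ := hlrS c hc hcS
      have u1 := (hur c hc).mono Ioi_subset_Ici_self
      have u2 := (hul c hc).mono Iio_subset_Iic_self
      rw [e2] at u1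
      rw [e1] at u2
      rw [hfb c hcS] at hde
      have E := (hPd c hc).exp
      have w1 := (E.hasDerivWithinAt (s := Ioi c)).mul (v1.sub u1)
      have w2 := (E.hasDerivWithinAt (s := Iio c)).mul (v2.sub u2)
      have hEp := Real.exp_pos (P c)
      refine ⟨Real.exp (P c) * (α - specA α β), Real.exp (P c) * (β - specA α β),
        w1.congr_deriv ?_, w2.congr_deriv ?_, ?_, ?_⟩
      · simp only [Pi.sub_apply]
        rw [← hd]
        linear_combination Real.exp (P c) * hde
      · simp only [Pi.sub_apply]
        rw [← hd]
        linear_combination Real.exp (P c) * hde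
      · exact (specA_between α β).1.imp (mul_nonpos_of_nonneg_of_nonpos hEp.le)
          (mul_nonpos_of_nonneg_of_nonpos hEp.le)
      · exact (specA_between α β).2.imp (mul_nonneg hEp.le) (mul_nonneg hEp.le)
    have hconst : ∀ x ∈ Ioo a b, ∀ y ∈ Ioo a b, x ≤ y → h x = h y := by
      intro x hx y hy hxy
      have hsub : Icc x y ⊆ Ioo a b := ordConnected_Ioo.out hx hy
      apply le_antisymm
      · have := spec_mono (fun z => -h z) S x y hxy
          (fun z hz => (hhc z (hsub hz)).neg.continuousWithinAt) (by
            intro c hc hcS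
            obtain ⟨α, β, h1, h2, -, h3⟩ := hhd c (hsub (Ioo_subset_Icc_self hc)) hcS
            exact ⟨-α, -β, h1.neg, h2.neg, by simpa using h3⟩)
        simpa using this
      · exact spec_mono h S x y hxy
          (fun z hz => (hhc z (hsub hz)).continuousWithinAt) (by
            intro c hc hcS
            obtain ⟨α, β, h1, h2, h3, -⟩ := hhd c (hsub (Ioo_subset_Icc_self hc)) hcS
            exact ⟨α, β, h1, h2, h3⟩)
    intro x hx
    have hx0 : h x = h x₀ := by
      rcases le_total x x₀ with q | q
      · exact hconst x hx x₀ hx₀ q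
      · exact (hconst x₀ hx₀ x hx q).symm
    have : h x₀ = 0 := by simp [hh, hv0, hu0]
    rw [this] at hx0
    have := (mul_eq_zero.1 hx0).resolve_left (Real.exp_pos _).ne'
    linarith
end

section
/- (Bound for the specularly directional derivative) Let n be a positive integer, g_R, g_L ∈ ℝⁿ, and u ∈ ℝⁿ a unit vector. Then −(‖g_R‖ + ‖g_L‖)/2 ≤ A(⟨g_R, u⟩, ⟨g_L, u⟩) ≤ (‖g_R‖ + ‖g_L‖)/2, where ⟨·,·⟩ is the Euclidean inner product and ‖·‖ the Euclidean norm. -/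
open Filter Topology Set

theorem specA_abs_le (α β : ℝ) : |specA α β| ≤ (|α| + |β|) / 2 := by
  unfold specA
  split_ifs with h
  · rw [abs_zero]; positivity
  · set S := Real.sqrt ((α ^ 2 + 1) * (β ^ 2 + 1)) with hS
    have h0 : 0 ≤ α * β - 1 + S := by
      have : 1 - α * β ≤ S := Real.le_sqrt_of_sq_le (by nlinarith [sq_nonneg (α + β)])
      linarith
    have h1 : S ≤ 1 + (α ^ 2 + β ^ 2) / 2 := by
      apply Real.sqrt_le_iff.mpr
      constructor
      · positivity
      · nlinarith [sq_nonneg (α ^ 2 - β ^ 2)]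
    have hp : 0 < |α + β| := abs_pos.mpr h
    rw [abs_div, abs_of_nonneg h0]
    have h2 : (α * β - 1 + S) / |α + β| ≤ |α + β| / 2 := by
      rw [div_le_iff₀ hp]
      nlinarith [abs_mul_abs_self (α + β)]
    linarith [abs_add_le α β]

open RealInnerProductSpace in
theorem specular_directional_deriv_bound (n : ℕ) (hn : 0 < n)
    (gR gL u : EuclideanSpace ℝ (Fin n)) (hu : ‖u‖ = 1) :
    -((‖gR‖ + ‖gL‖) / 2) ≤ specA ⟪gR, u⟫ ⟪gL, u⟫ ∧
      specA ⟪gR, u⟫ ⟪gL, u⟫ ≤ (‖gR‖ + ‖gL‖) / 2 := by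
  have hR : |⟪gR, u⟫| ≤ ‖gR‖ := by simpa [hu] using abs_real_inner_le_norm gR u
  have hL : |⟪gL, u⟫| ≤ ‖gL‖ := by simpa [hu] using abs_real_inner_le_norm gL u
  exact abs_le.mp ((specA_abs_le _ _).trans (by linarith))
end
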